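/- arXiv:1805.11855 — 2 statements merged into one kernel-verified Lean document; each statement's English description precedes it below -/
import Mathlib

section
/- Let α > −1, γ > −1 and β < α + 1 be real numbers, and suppose ∫₀ˣ (x² − t²)^γ t^{−β} J_α(t) dt ≥ 0 for every x > 0. Then necessarily β ≥ −(γ + 1/2) and −α − 1 < β < α + 1. -/
open Real

/-- The Bessel function of the first kind of real order `α`. -/
noncomputable def besselJ (α : ℝ) (t : ℝ) : ℝ :=
  ∑' k : ℕ, (-1 : ℝ) ^ k / ((k.factorial : ℝ) * Real.Gamma (α + k + 1)) *
    (t / 2) ^ (2 * (k : ℝ) + α)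

/-!
Put `a = (α - β + 1) / 2`. Substituting `v = (t / x) ^ 2` and integrating the Bessel series term by
term, the integral over `(0, x)` is a positive multiple of `Φ (x² / 4)`, where
`Φ u = ₁F₂(a; α + 1, a + γ + 1; -u)`. So the hypothesis says that `Φ ≥ 0` on `(0, ∞)`, and the two
inequalities to be shown are `a < α + 1` and `3a + 1/2 ≤ (α + 1) + (a + γ + 1)`.

If `α + 1 ≤ a`, Euler's integral turns `Φ` into a positive average equal to
`₀F₁(; a + γ + 1; -u)`. But that function takes negative values, since its Laplace transform does.

Given `a < α + 1`, averaging `Φ` against gamma laws reduces its Mellin transform to that of a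
positive mixture of exponentials, which shows that `∫ u ^ (s - 1) Φ u du` is finite for
`0 < s < a`. Hence `v ^ (2s - 1) Φ (v²) dv` is a finite positive measure. Its Laplace transform at
`2 / w` is a multiple of `w ^ (2s) ₃F₂(s, s + 1/2, a; α + 1, a + γ + 1; -w²)`, and it stays bounded
by the total mass as `w` approaches the imaginary axis, where `-w²` becomes positive. Therefore the
series of positive coefficients of this `₃F₂` converges, which forces
`2s + 1/2 + a < (α + 1) + (a + γ + 1)`. Now let `s` tend to `a`.
-/

open MeasureTheory ProbabilityTheory Set Filter Topology
open scoped Nat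

section Pochhammer

theorem Gamma_add_nat_eq_ascPochhammer_mul {s : ℝ} (hs : 0 < s) (k : ℕ) :
    Gamma (s + k) = (ascPochhammer ℝ k).eval s * Gamma s := by
  induction k with
  | zero => simp
  | succ k ih =>
    have hne : s + k ≠ 0 := by positivity
    rw [Nat.cast_succ, ← add_assoc, Gamma_add_one hne, ih, ascPochhammer_succ_eval]
    ring

theorem ascPochhammer_eval_two_mul (s : ℝ) (k : ℕ) :
    (ascPochhammer ℝ (2 * k)).eval (2 * s) =
      4 ^ k * ((ascPochhammer ℝ k).eval s * (ascPochhammer ℝ k).eval (s + 1 / 2)) := by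
  induction k with
  | zero => simp
  | succ k ih =>
    rw [show 2 * (k + 1) = 2 * k + 1 + 1 by ring]
    simp only [ascPochhammer_succ_eval, ih]
    push_cast
    ring

end Pochhammer

section Hypergeometric

/-- The coefficients of the regularized hypergeometric series with real parameters; the real
counterpart of `Complex.regularizedHGFunCoeff`. -/
noncomputable def regularizedHGCoeff (as bs : Multiset ℝ) (k : ℕ) : ℝ :=
  (as.map (ascPochhammer ℝ k).eval).prod / (k ! * (bs.map (Gamma <| · + k)).prod)

/-- The regularized hypergeometric function of a real variable with real parameters; the real
counterpart of `Complex.regularizedHGFun`. Dividing by `Gamma` of the lower parameters, rather than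
by their Pochhammer symbols, keeps the integral transforms below free of extra factors. -/
noncomputable def regularizedHG (as bs : Multiset ℝ) (x : ℝ) : ℝ :=
  ∑' k, regularizedHGCoeff as bs k * x ^ k

variable {as bs : Multiset ℝ}

theorem ofReal_regularizedHGCoeff (as bs : Multiset ℝ) (k : ℕ) :
    (regularizedHGCoeff as bs k : ℂ) =
      Complex.regularizedHGFunCoeff (as.map Complex.ofReal) (bs.map Complex.ofReal) k := by
  have eval_ofReal (a : ℝ) :
      (ascPochhammer ℂ k).eval (a : ℂ) = ((ascPochhammer ℝ k).eval a : ℝ) := by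
    rw [← ascPochhammer_map Complex.ofRealHom, ← Complex.ofRealHom_eq_coe,
      Polynomial.eval_map_apply, Complex.ofRealHom_eq_coe]
  have prod_ofReal (m : Multiset ℝ) : ((m.prod : ℝ) : ℂ) = (m.map Complex.ofReal).prod :=
    map_multiset_prod Complex.ofRealHom m
  simp only [regularizedHGCoeff, Complex.regularizedHGFunCoeff, Complex.ofReal_div,
    Complex.ofReal_mul, Complex.ofReal_natCast, prod_ofReal, Multiset.map_map, Function.comp_def,
    eval_ofReal, ← Complex.Gamma_ofReal, Complex.ofReal_add]

theorem summable_abs_regularizedHGCoeff_mul_pow {x : ℝ}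
    (hx : ENNReal.ofReal |x| < (Complex.regularizedHGFunSeries (as.map Complex.ofReal)
      (bs.map Complex.ofReal)).radius) :
    Summable fun k ↦ |regularizedHGCoeff as bs k * x ^ k| := by
  have h := FormalMultilinearSeries.summable_norm_mul_pow _ hx
  simpa [Complex.regularizedHGFunSeries, ← ofReal_regularizedHGCoeff, abs_mul] using h

theorem summable_abs_regularizedHGCoeff_mul_pow_of_card_le (h : as.card ≤ bs.card) (x : ℝ) :
    Summable fun k ↦ |regularizedHGCoeff as bs k * x ^ k| :=
  summable_abs_regularizedHGCoeff_mul_pow <| by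
    rw [Complex.radius_regularizedHGFunSeries_eq_top (by simpa using h)]
    exact ENNReal.ofReal_lt_top

theorem summable_abs_regularizedHGCoeff_mul_pow_of_card_eq (h : as.card = bs.card + 1) {x : ℝ}
    (hx : |x| < 1) : Summable fun k ↦ |regularizedHGCoeff as bs k * x ^ k| :=
  summable_abs_regularizedHGCoeff_mul_pow <|
    (ENNReal.ofReal_lt_one.2 hx).trans_le <|
      Complex.radius_regularizedHGFunSeries_ge_one (by simpa using h)

theorem regularizedHGCoeff_pos (has : ∀ a ∈ as, 0 < a) (hbs : ∀ b ∈ bs, 0 < b) (k : ℕ) :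
    0 < regularizedHGCoeff as bs k := by
  refine div_pos (Multiset.prod_pos ?_) (mul_pos (by positivity) (Multiset.prod_pos ?_))
  · simpa using fun a ha ↦ ascPochhammer_pos k a (has a ha)
  · simpa using fun b hb ↦ Gamma_pos_of_pos (add_pos_of_pos_of_nonneg (hbs b hb) k.cast_nonneg)

theorem regularizedHGCoeff_cons_left (a : ℝ) (as bs : Multiset ℝ) (k : ℕ) :
    regularizedHGCoeff (a ::ₘ as) bs k =
      regularizedHGCoeff as bs k * (ascPochhammer ℝ k).eval a := by
  simp only [regularizedHGCoeff, Multiset.map_cons, Multiset.prod_cons]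
  ring

theorem regularizedHGCoeff_cons_right (as bs : Multiset ℝ) (b : ℝ) (k : ℕ) :
    regularizedHGCoeff as (b ::ₘ bs) k = regularizedHGCoeff as bs k / Gamma (b + k) := by
  simp only [regularizedHGCoeff, Multiset.map_cons, Multiset.prod_cons, div_eq_mul_inv, mul_inv]
  ring

theorem regularizedHGCoeff_cons_cons {a : ℝ} (ha : 0 < a) (as bs : Multiset ℝ) (k : ℕ) :
    regularizedHGCoeff (a ::ₘ as) (a ::ₘ bs) k = regularizedHGCoeff as bs k / Gamma a := by
  rw [regularizedHGCoeff_cons_right, regularizedHGCoeff_cons_left,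
    Gamma_add_nat_eq_ascPochhammer_mul ha, mul_comm _ (Gamma a),
    mul_div_mul_right _ _ (ascPochhammer_pos k a ha).ne']

theorem regularizedHG_cons_cons {a : ℝ} (ha : 0 < a) (as bs : Multiset ℝ) (x : ℝ) :
    regularizedHG (a ::ₘ as) (a ::ₘ bs) x = regularizedHG as bs x / Gamma a := by
  simp only [regularizedHG, regularizedHGCoeff_cons_cons ha, div_mul_eq_mul_div, tsum_div_const]

theorem regularizedHG_zero_zero : regularizedHG 0 0 = exp := by
  ext x
  simp [regularizedHG, regularizedHGCoeff, exp_eq_exp_ℝ, NormedSpace.exp_eq_tsum_div,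
    inv_mul_eq_div]

theorem measurable_regularizedHG (as bs : Multiset ℝ) :
    Measurable (regularizedHG as bs) := by
  unfold regularizedHG
  fun_prop

end Hypergeometric

section TermwiseIntegration

variable {Ω : Type*} [MeasurableSpace Ω] {μ : Measure Ω} {X : Ω → ℝ} {f : ℕ → ℝ}

theorem integral_abs_mul_pow (hX : 0 ≤ᵐ[μ] X) (c : ℝ) (k : ℕ) :
    ∫ ω, |c * X ω ^ k| ∂μ = |c| * ∫ ω, X ω ^ k ∂μ := by
  rw [← integral_const_mul]
  refine integral_congr_ae ?_
  filter_upwards [hX] with ω (hω : 0 ≤ X ω)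
  rw [abs_mul, abs_of_nonneg (pow_nonneg hω k)]

theorem integral_tsum_mul_pow (hX : 0 ≤ᵐ[μ] X) (hint : ∀ k, Integrable (fun ω ↦ X ω ^ k) μ)
    (hf : Summable fun k ↦ |f k| * ∫ ω, X ω ^ k ∂μ) :
    ∫ ω, ∑' k, f k * X ω ^ k ∂μ = ∑' k, f k * ∫ ω, X ω ^ k ∂μ := by
  simp only [← integral_const_mul]
  refine (integral_tsum_of_summable_integral_norm (fun k ↦ (hint k).const_mul _) ?_).symm
  simpa only [norm_eq_abs, integral_abs_mul_pow hX] using hf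

theorem integrable_tsum_mul_pow (hX : 0 ≤ᵐ[μ] X) (hint : ∀ k, Integrable (fun ω ↦ X ω ^ k) μ)
    (hf : Summable fun k ↦ |f k| * ∫ ω, X ω ^ k ∂μ) :
    Integrable (fun ω ↦ ∑' k, f k * X ω ^ k) μ := by
  have hint' (k : ℕ) : Integrable (fun ω ↦ f k * X ω ^ k) μ := (hint k).const_mul _
  refine ⟨?_, (lintegral_mono fun ω ↦ enorm_tsum_le_tsum_enorm).trans_lt ?_⟩
  · exact (AEMeasurable.tsum fun k ↦ (hint' k).aemeasurable).aestronglyMeasurable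
  · rw [lintegral_tsum fun k ↦ (hint' k).1.enorm]
    simp only [← ofReal_integral_norm_eq_lintegral_enorm (hint' _), norm_eq_abs,
      integral_abs_mul_pow hX]
    exact hf.tsum_ofReal_lt_top

end TermwiseIntegration

section BetaGammaMoments

variable {p q r s : ℝ}

theorem measurable_betaPDF (p q : ℝ) : Measurable (betaPDF p q) :=
  (measurable_betaPDFReal p q).ennreal_ofReal

theorem measurable_gammaPDF (p r : ℝ) : Measurable (gammaPDF p r) :=
  (measurable_gammaPDFReal p r).ennreal_ofReal

theorem betaPDF_eq_zero_of_notMem_Ioo {t : ℝ} (ht : t ∉ Ioo 0 1) : betaPDF p q t = 0 := by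
  rcases le_or_gt t 0 with h0 | h0
  · exact betaPDF_eq_zero_of_nonpos h0
  · exact betaPDF_eq_zero_of_one_le (not_lt.1 fun h1 ↦ ht ⟨h0, h1⟩)

theorem ae_mem_Ioo_betaMeasure (p q : ℝ) : ∀ᵐ t ∂betaMeasure p q, t ∈ Ioo (0 : ℝ) 1 :=
  (ae_withDensity_iff (measurable_betaPDF p q)).2 <| ae_of_all _ fun _ ↦
    not_imp_comm.1 betaPDF_eq_zero_of_notMem_Ioo

theorem ae_pos_gammaMeasure (p r : ℝ) : ∀ᵐ t ∂gammaMeasure p r, 0 < t := by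
  refine (ae_withDensity_iff (measurable_gammaPDF p r)).2 ?_
  filter_upwards [Measure.ae_ne volume 0] with t ht0
  contrapose!
  exact fun hle ↦ gammaPDF_of_neg (lt_of_le_of_ne hle ht0)

theorem gammaMeasure_eq_withDensity_restrict (p r : ℝ) :
    gammaMeasure p r = (volume.restrict (Ioi 0)).withDensity (gammaPDF p r) := by
  rw [← restrict_withDensity measurableSet_Ioi]
  exact (Measure.restrict_eq_self_of_ae_mem (s := Ioi 0) (ae_pos_gammaMeasure p r)).symm

theorem integral_betaMeasure (hp : 0 < p) (hq : 0 < q) (f : ℝ → ℝ) :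
    ∫ v, f v ∂betaMeasure p q =
      (beta p q)⁻¹ * ∫ v in Ioo 0 1, v ^ (p - 1) * (1 - v) ^ (q - 1) * f v := by
  have hzero (v : ℝ) (hv : v ∉ Ioo 0 1) : (betaPDF p q v).toReal • f v = 0 := by
    rw [betaPDF_eq_zero_of_notMem_Ioo hv, ENNReal.toReal_zero, zero_smul]
  rw [betaMeasure, integral_withDensity_eq_integral_toReal_smul (measurable_betaPDF p q)
    (ae_of_all _ fun v ↦ ENNReal.ofReal_lt_top), ← integral_const_mul,
    ← setIntegral_eq_integral_of_forall_compl_eq_zero hzero]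
  refine setIntegral_congr_fun measurableSet_Ioo fun v hv ↦ ?_
  simp only [betaPDF, ENNReal.toReal_ofReal (betaPDFReal_pos hv.1 hv.2 hp hq).le, smul_eq_mul]
  rw [betaPDFReal, if_pos (mem_Ioo.1 hv)]
  ring

theorem integral_gammaMeasure (hp : 0 < p) (hr : 0 < r) (f : ℝ → ℝ) :
    ∫ x, f x ∂gammaMeasure p r =
      r ^ p / Gamma p * ∫ x in Ioi 0, exp (-(r * x)) * (x ^ (p - 1) * f x) := by
  rw [gammaMeasure_eq_withDensity_restrict, integral_withDensity_eq_integral_toReal_smul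
    (measurable_gammaPDF p r) (ae_of_all _ fun x ↦ ENNReal.ofReal_lt_top), ← integral_const_mul]
  refine setIntegral_congr_fun measurableSet_Ioi fun x (hx : 0 < x) ↦ ?_
  simp only [gammaPDF_of_nonneg hx.le, smul_eq_mul]
  rw [ENNReal.toReal_ofReal (by positivity)]
  ring

theorem lintegral_withDensity_of_mul_eq {α : Type*} [MeasurableSpace α] {μ : Measure α}
    {f g h : α → ENNReal} {c : ENNReal} (hf : Measurable f) (hg : Measurable g) (hh : Measurable h)
    (hfgh : ∀ᵐ x ∂μ, f x * h x = c * g x) : ∫⁻ x, h x ∂μ.withDensity f = c * ∫⁻ x, g x ∂μ := by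
  rw [lintegral_withDensity_eq_lintegral_mul _ hf hh, ← lintegral_const_mul _ hg]
  exact lintegral_congr_ae hfgh

theorem lintegral_rpow_betaMeasure (hp : 0 < p) (hq : 0 < q) (hs : 0 < p + s) :
    ∫⁻ t, ENNReal.ofReal (t ^ s) ∂betaMeasure p q =
      ENNReal.ofReal (beta (p + s) q / beta p q) := by
  have hβ := (beta_pos hs hq).ne'
  have shift (t : ℝ) : betaPDF p q t * ENNReal.ofReal (t ^ s) =
      ENNReal.ofReal (beta (p + s) q / beta p q) * betaPDF (p + s) q t := by
    by_cases ht : t ∈ Ioo (0 : ℝ) 1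
    · rw [betaPDF, betaPDF, ← ENNReal.ofReal_mul (betaPDFReal_pos ht.1 ht.2 hp hq).le,
        ← ENNReal.ofReal_mul (div_pos (beta_pos hs hq) (beta_pos hp hq)).le, betaPDFReal,
        betaPDFReal, if_pos (mem_Ioo.1 ht), if_pos (mem_Ioo.1 ht),
        show p + s - 1 = p - 1 + s by ring, rpow_add ht.1]
      field_simp
    · simp only [betaPDF_eq_zero_of_notMem_Ioo ht, zero_mul, mul_zero]
  rw [betaMeasure, lintegral_withDensity_of_mul_eq (measurable_betaPDF p q)
    (measurable_betaPDF (p + s) q) (by fun_prop) (ae_of_all _ shift),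
    lintegral_betaPDF_eq_one hs hq, mul_one]

theorem lintegral_rpow_gammaMeasure (hp : 0 < p) (hr : 0 < r) (hs : 0 < p + s) :
    ∫⁻ t, ENNReal.ofReal (t ^ s) ∂gammaMeasure p r =
      ENNReal.ofReal (Gamma (p + s) / Gamma p / r ^ s) := by
  have hΓ := (Gamma_pos_of_pos hs).ne'
  have shift : ∀ᵐ t, gammaPDF p r t * ENNReal.ofReal (t ^ s) =
      ENNReal.ofReal (Gamma (p + s) / Gamma p / r ^ s) * gammaPDF (p + s) r t := by
    filter_upwards [Measure.ae_ne volume 0] with t ht0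
    rcases ht0.lt_or_gt with ht | ht
    · simp only [gammaPDF_of_neg ht, zero_mul, mul_zero]
    · rw [gammaPDF, gammaPDF, ← ENNReal.ofReal_mul (gammaPDFReal_nonneg hp hr t),
        ← ENNReal.ofReal_mul (by positivity), gammaPDFReal, gammaPDFReal, if_pos ht.le,
        if_pos ht.le, show p + s - 1 = p - 1 + s by ring, rpow_add ht, rpow_add hr]
      field_simp
  rw [gammaMeasure, lintegral_withDensity_of_mul_eq (measurable_gammaPDF p r)
    (measurable_gammaPDF (p + s) r) (by fun_prop) shift, lintegral_gammaPDF_eq_one hs hr, mul_one]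

theorem integrable_pow_betaMeasure (hp : 0 < p) (hq : 0 < q) (k : ℕ) :
    Integrable (fun t ↦ t ^ k) (betaMeasure p q) := by
  have hmem := ae_mem_Ioo_betaMeasure p q
  have hmom := lintegral_rpow_betaMeasure hp hq (s := k) (by positivity)
  simp only [rpow_natCast] at hmom
  rw [← lintegral_ofReal_ne_top_iff_integrable (by fun_prop)
    (hmem.mono fun t ht ↦ pow_nonneg ht.1.le k), hmom]
  exact ENNReal.ofReal_ne_top

theorem integral_pow_betaMeasure (hp : 0 < p) (hq : 0 < q) (k : ℕ) :
    ∫ t, t ^ k ∂betaMeasure p q =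
      (ascPochhammer ℝ k).eval p * Gamma (p + q) / Gamma (p + q + k) := by
  have hpk : 0 < p + k := by positivity
  have hmem := ae_mem_Ioo_betaMeasure p q
  have hmom := lintegral_rpow_betaMeasure hp hq hpk
  simp only [rpow_natCast] at hmom
  rw [integral_eq_lintegral_of_nonneg_ae (hmem.mono fun t ht ↦ pow_nonneg ht.1.le k)
    (by fun_prop), hmom, ENNReal.toReal_ofReal (div_pos (beta_pos hpk hq) (beta_pos hp hq)).le,
    beta, beta, add_right_comm p (k : ℝ) q, Gamma_add_nat_eq_ascPochhammer_mul hp]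
  field_simp

theorem integrable_pow_gammaMeasure (hp : 0 < p) (hr : 0 < r) (k : ℕ) :
    Integrable (fun t ↦ t ^ k) (gammaMeasure p r) := by
  have hmom := lintegral_rpow_gammaMeasure hp hr (s := k) (by positivity)
  simp only [rpow_natCast] at hmom
  rw [← lintegral_ofReal_ne_top_iff_integrable (by fun_prop)
    ((ae_pos_gammaMeasure p r).mono fun t ht ↦ pow_nonneg ht.le k), hmom]
  exact ENNReal.ofReal_ne_top

theorem integral_pow_gammaMeasure (hp : 0 < p) (hr : 0 < r) (k : ℕ) :
    ∫ t, t ^ k ∂gammaMeasure p r = (ascPochhammer ℝ k).eval p / r ^ k := by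
  have hmom := lintegral_rpow_gammaMeasure hp hr (s := k) (by positivity)
  simp only [rpow_natCast] at hmom
  rw [integral_eq_lintegral_of_nonneg_ae
    ((ae_pos_gammaMeasure p r).mono fun t ht ↦ pow_nonneg ht.le k) (by fun_prop), hmom,
    ENNReal.toReal_ofReal (by positivity), Gamma_add_nat_eq_ascPochhammer_mul hp,
    mul_div_cancel_right₀ _ (Gamma_pos_of_pos hp).ne']

end BetaGammaMoments

section IntegralTransforms

variable {as bs : Multiset ℝ} {p q r x : ℝ}

section Moments

variable {Ω : Type*} [MeasurableSpace Ω] {μ : Measure Ω} {X : Ω → ℝ} {as' bs' : Multiset ℝ}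
  {c y : ℝ}

theorem summable_abs_mul_integral_pow (hX : 0 ≤ᵐ[μ] X)
    (hmom : ∀ k, regularizedHGCoeff as bs k * ∫ ω, X ω ^ k ∂μ =
      c * (regularizedHGCoeff as' bs' k * y ^ k))
    (hsum : Summable fun k ↦ |regularizedHGCoeff as' bs' k * (x * y) ^ k|) :
    Summable fun k ↦ |regularizedHGCoeff as bs k * x ^ k| * ∫ ω, X ω ^ k ∂μ := by
  refine (hsum.mul_left |c|).congr fun k ↦ ?_
  have hnonneg : 0 ≤ ∫ ω, X ω ^ k ∂μ :=
    integral_nonneg_of_ae <| hX.mono fun ω hω ↦ pow_nonneg hω k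
  rw [← abs_of_nonneg hnonneg, ← abs_mul, ← abs_mul, mul_pow]
  congr 1
  linear_combination -x ^ k * hmom k

theorem integrable_regularizedHG_mul (hX : 0 ≤ᵐ[μ] X)
    (hint : ∀ k, Integrable (fun ω ↦ X ω ^ k) μ)
    (hmom : ∀ k, regularizedHGCoeff as bs k * ∫ ω, X ω ^ k ∂μ =
      c * (regularizedHGCoeff as' bs' k * y ^ k))
    (hsum : Summable fun k ↦ |regularizedHGCoeff as' bs' k * (x * y) ^ k|) :
    Integrable (fun ω ↦ regularizedHG as bs (x * X ω)) μ := by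
  simp only [regularizedHG, mul_pow, ← mul_assoc]
  exact integrable_tsum_mul_pow hX hint (summable_abs_mul_integral_pow hX hmom hsum)

theorem integral_regularizedHG_mul (hX : 0 ≤ᵐ[μ] X)
    (hint : ∀ k, Integrable (fun ω ↦ X ω ^ k) μ)
    (hmom : ∀ k, regularizedHGCoeff as bs k * ∫ ω, X ω ^ k ∂μ =
      c * (regularizedHGCoeff as' bs' k * y ^ k))
    (hsum : Summable fun k ↦ |regularizedHGCoeff as' bs' k * (x * y) ^ k|) :
    ∫ ω, regularizedHG as bs (x * X ω) ∂μ = c * regularizedHG as' bs' (x * y) := by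
  simp only [regularizedHG, mul_pow, ← mul_assoc]
  rw [integral_tsum_mul_pow hX hint (summable_abs_mul_integral_pow hX hmom hsum)]
  simp only [mul_assoc, ← tsum_mul_left]
  refine tsum_congr fun k ↦ ?_
  linear_combination x ^ k * hmom k

end Moments

theorem integral_regularizedHG_betaMeasure (hcard : as.card ≤ bs.card) (hp : 0 < p) (hq : 0 < q)
    (x : ℝ) : ∫ t, regularizedHG as bs (x * t) ∂betaMeasure p q =
      Gamma (p + q) * regularizedHG (p ::ₘ as) ((p + q) ::ₘ bs) x := by
  have hmom (k : ℕ) : regularizedHGCoeff as bs k * ∫ t, t ^ k ∂betaMeasure p q =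
      Gamma (p + q) * (regularizedHGCoeff (p ::ₘ as) ((p + q) ::ₘ bs) k * 1 ^ k) := by
    rw [integral_pow_betaMeasure hp hq, regularizedHGCoeff_cons_right,
      regularizedHGCoeff_cons_left]
    ring
  simpa using integral_regularizedHG_mul (x := x)
    ((ae_mem_Ioo_betaMeasure p q).mono fun t ht ↦ ht.1.le) (integrable_pow_betaMeasure hp hq) hmom
    (summable_abs_regularizedHGCoeff_mul_pow_of_card_le (by simpa using hcard) _)

theorem regularizedHGCoeff_mul_integral_pow_gammaMeasure (hp : 0 < p) (hr : 0 < r) (k : ℕ) :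
    regularizedHGCoeff as bs k * ∫ t, t ^ k ∂gammaMeasure p r =
      1 * (regularizedHGCoeff (p ::ₘ as) bs k * r⁻¹ ^ k) := by
  rw [integral_pow_gammaMeasure hp hr, regularizedHGCoeff_cons_left, inv_pow]
  ring

theorem integrable_regularizedHG_gammaMeasure (hcard : as.card + 1 ≤ bs.card) (hp : 0 < p)
    (hr : 0 < r) (x : ℝ) :
    Integrable (fun t ↦ regularizedHG as bs (x * t)) (gammaMeasure p r) :=
  integrable_regularizedHG_mul ((ae_pos_gammaMeasure p r).mono fun _ ht ↦ ht.le)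
    (integrable_pow_gammaMeasure hp hr) (regularizedHGCoeff_mul_integral_pow_gammaMeasure hp hr)
    (summable_abs_regularizedHGCoeff_mul_pow_of_card_le (by simpa using hcard) _)

theorem integral_regularizedHG_gammaMeasure (hcard : as.card + 1 ≤ bs.card) (hp : 0 < p)
    (hr : 0 < r) (x : ℝ) :
    ∫ t, regularizedHG as bs (x * t) ∂gammaMeasure p r =
      regularizedHG (p ::ₘ as) bs (x / r) := by
  simpa [div_eq_mul_inv] using integral_regularizedHG_mul
    ((ae_pos_gammaMeasure p r).mono fun _ ht ↦ ht.le) (integrable_pow_gammaMeasure hp hr)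
    (regularizedHGCoeff_mul_integral_pow_gammaMeasure hp hr)
    (summable_abs_regularizedHGCoeff_mul_pow_of_card_le (by simpa using hcard) (x * r⁻¹))

theorem integral_regularizedHG_sq_gammaMeasure (hcard : as.card + 1 = bs.card) (hp : 0 < p)
    (hr : 0 < r) (hx : |x * (4 / r ^ 2)| < 1) :
    ∫ t, regularizedHG as bs (x * t ^ 2) ∂gammaMeasure (2 * p) r =
      regularizedHG (p ::ₘ (p + 1 / 2) ::ₘ as) bs (x * (4 / r ^ 2)) := by
  have h2p : 0 < 2 * p := by positivity
  have hmom (k : ℕ) : regularizedHGCoeff as bs k * ∫ t, (t ^ 2) ^ k ∂gammaMeasure (2 * p) r =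
      1 * (regularizedHGCoeff (p ::ₘ (p + 1 / 2) ::ₘ as) bs k * (4 / r ^ 2) ^ k) := by
    simp only [← pow_mul]
    rw [integral_pow_gammaMeasure h2p hr, ascPochhammer_eval_two_mul,
      regularizedHGCoeff_cons_left, regularizedHGCoeff_cons_left, div_pow, ← pow_mul]
    ring
  have hint (k : ℕ) : Integrable (fun t ↦ (t ^ 2) ^ k) (gammaMeasure (2 * p) r) := by
    simp only [← pow_mul]
    exact integrable_pow_gammaMeasure h2p hr _
  rw [← one_mul (regularizedHG _ _ (x * _))]
  exact integral_regularizedHG_mul (ae_of_all _ sq_nonneg) hint hmom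
    (summable_abs_regularizedHGCoeff_mul_pow_of_card_eq (by simp [hcard]) hx)

end IntegralTransforms

section NegativeArguments

variable {as bs : Multiset ℝ} {a b c : ℝ}

theorem regularizedHG_nonneg_of_cons_cons (hcard : as.card ≤ bs.card) (hb : 0 < b) (hba : b ≤ a)
    (h : ∀ u, 0 < u → 0 ≤ regularizedHG (a ::ₘ as) (b ::ₘ bs) (-u)) {u : ℝ} (hu : 0 < u) :
    0 ≤ regularizedHG as bs (-u) := by
  have ha : 0 < a := hb.trans_le hba
  rcases hba.eq_or_lt with rfl | hlt
  · have := h u hu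
    rwa [regularizedHG_cons_cons hb, le_div_iff₀ (Gamma_pos_of_pos hb), zero_mul] at this
  · have euler := integral_regularizedHG_betaMeasure (as := a ::ₘ as) (bs := b ::ₘ bs)
      (by simpa using hcard) hb (sub_pos.2 hlt) (-u)
    rw [add_sub_cancel, Multiset.cons_swap, regularizedHG_cons_cons ha, regularizedHG_cons_cons hb,
      mul_div_cancel₀ _ (Gamma_pos_of_pos ha).ne'] at euler
    have nonneg : 0 ≤ regularizedHG as bs (-u) / Gamma b := by
      rw [← euler]
      refine integral_nonneg_of_ae ((ae_mem_Ioo_betaMeasure _ _).mono fun t ht ↦ ?_)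
      simpa using h (u * t) (mul_pos hu ht.1)
    rwa [le_div_iff₀ (Gamma_pos_of_pos hb), zero_mul] at nonneg

theorem regularizedHG_add_one_self (hc : 0 < c) (x : ℝ) :
    regularizedHG {c + 1} {c} x = (1 + x / c) * exp x / Gamma c := by
  have hexp : HasSum (fun k : ℕ ↦ x ^ k / k !) (exp x) := by
    simpa [exp_eq_exp_ℝ] using NormedSpace.expSeries_div_hasSum_exp x
  have hmulexp : HasSum (fun k : ℕ ↦ k * (x ^ k / k !)) (x * exp x) := by
    rw [← hasSum_nat_add_iff' 1]
    simp only [Finset.sum_range_one, Nat.cast_zero, zero_mul, sub_zero]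
    refine (hexp.mul_left x).congr_fun fun k ↦ ?_
    rw [Nat.factorial_succ]
    push_cast
    field_simp
    ring
  have coeff_eq (k : ℕ) : regularizedHGCoeff {c + 1} {c} k * x ^ k =
      (x ^ k / k ! + k * (x ^ k / k !) / c) / Gamma c := by
    have hck : c + k ≠ 0 := by positivity
    have key : (ascPochhammer ℝ k).eval (c + 1) * Gamma c * c = Gamma (c + k) * (c + k) := by
      rw [mul_assoc, mul_comm (Gamma c), mul_comm (Gamma _), ← Gamma_add_one hc.ne',
        ← Gamma_add_one hck,
        ← Gamma_add_nat_eq_ascPochhammer_mul (by positivity), add_right_comm]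
    have hΓ := (Gamma_pos_of_pos hc).ne'
    have hΓk : Gamma (c + k) ≠ 0 := (Gamma_pos_of_pos (by positivity)).ne'
    simp only [regularizedHGCoeff, Multiset.map_singleton, Multiset.prod_singleton]
    field_simp
    linear_combination x ^ k * key
  rw [regularizedHG, funext coeff_eq, ((hexp.add (hmulexp.div_const c)).div_const _).tsum_eq]
  ring

-- Laplace averaging of order `c + 1` produces a multiple of `(1 - x / c) * exp (-x)`, which is
-- negative for `x > c`.
theorem exists_regularizedHG_neg (hc : 0 < c) : ∃ u, 0 < u ∧ regularizedHG 0 {c} (-u) < 0 := by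
  by_contra! h
  have hc1 : 0 < c + 1 := by positivity
  have laplace := integral_regularizedHG_gammaMeasure (as := 0) (bs := {c}) (by simp) hc1
    (inv_pos.2 hc1) (-1)
  rw [div_inv_eq_mul, neg_one_mul, Multiset.cons_zero, regularizedHG_add_one_self hc] at laplace
  have nonneg : 0 ≤ ∫ t, regularizedHG 0 {c} (-1 * t) ∂gammaMeasure (c + 1) (c + 1)⁻¹ :=
    integral_nonneg_of_ae <| (ae_pos_gammaMeasure _ _).mono fun t ht ↦ by simpa using h t ht
  have neg : (1 + -(c + 1) / c) * exp (-(c + 1)) / Gamma c < 0 := by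
    have : 1 + -(c + 1) / c = -c⁻¹ := by field_simp; ring
    rw [this]
    exact div_neg_of_neg_of_pos (mul_neg_of_neg_of_pos (by simpa) (exp_pos _)) (Gamma_pos_of_pos hc)
  linarith

end NegativeArguments

section CoefficientAsymptotics

variable {as bs m : Multiset ℝ}

theorem ascPochhammer_eval_mul_GammaSeq {s : ℝ} (hs : 0 < s) (n : ℕ) :
    (ascPochhammer ℝ (n + 1)).eval s * GammaSeq s n = n ^ s * n ! := by
  have eval_eq_prod (k : ℕ) : (ascPochhammer ℝ k).eval s = ∏ j ∈ Finset.range k, (s + j) := by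
    induction k with
    | zero => simp
    | succ k ih => rw [ascPochhammer_succ_eval, Finset.prod_range_succ, ih]
  rw [GammaSeq, ← eval_eq_prod, mul_div_cancel₀ _ (ascPochhammer_pos (n + 1) s hs).ne']

theorem prod_ascPochhammer_eval_mul_prod_GammaSeq (hm : ∀ s ∈ m, 0 < s) {n : ℕ} (hn : 0 < n) :
    (m.map (ascPochhammer ℝ (n + 1)).eval).prod * (m.map (GammaSeq · n)).prod =
      n ^ m.sum * n ! ^ m.card := by
  have hn' : (0 : ℝ) < n := Nat.cast_pos.2 hn
  have sum_rpow : (m.map ((n : ℝ) ^ ·)).prod = n ^ m.sum := by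
    induction m using Multiset.induction with
    | empty => simp
    | cons s m ih =>
      rw [Multiset.map_cons, Multiset.prod_cons, Multiset.sum_cons, rpow_add hn',
        ih fun t ht ↦ hm t (Multiset.mem_cons_of_mem ht)]
  rw [← Multiset.prod_map_mul,
    Multiset.map_congr rfl fun s hs ↦ ascPochhammer_eval_mul_GammaSeq (hm s hs) n,
    Multiset.prod_map_mul, sum_rpow, Multiset.map_const', Multiset.prod_replicate]

theorem tendsto_prod_GammaSeq (m : Multiset ℝ) :
    Tendsto (fun n ↦ (m.map (GammaSeq · n)).prod) atTop (𝓝 (m.map Gamma).prod) :=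
  tendsto_multiset_prod m fun s _ ↦ GammaSeq_tendsto_Gamma s

theorem tendsto_mul_regularizedHGCoeff (hcard : as.card = bs.card + 1) (has : ∀ a ∈ as, 0 < a)
    (hbs : ∀ b ∈ bs, 0 < b) :
    Tendsto (fun n : ℕ ↦ (n + 1) * n ^ (bs.sum - as.sum) * regularizedHGCoeff as bs (n + 1)) atTop
      (𝓝 (as.map Gamma).prod⁻¹) := by
  have prod_Gamma_pos {m : Multiset ℝ} (hm : ∀ s ∈ m, 0 < s) : 0 < (m.map Gamma).prod :=
    Multiset.prod_pos (by simpa using fun s hs ↦ Gamma_pos_of_pos (hm s hs))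
  have hlim : Tendsto (fun n ↦ (bs.map (GammaSeq · n)).prod /
      ((bs.map Gamma).prod * (as.map (GammaSeq · n)).prod)) atTop (𝓝 (as.map Gamma).prod⁻¹) := by
    have hpos := mul_pos (prod_Gamma_pos hbs) (prod_Gamma_pos has)
    have := (tendsto_prod_GammaSeq bs).div ((tendsto_prod_GammaSeq as).const_mul _) hpos.ne'
    rwa [div_mul_cancel_left₀ (prod_Gamma_pos hbs).ne'] at this
  refine hlim.congr' ?_
  filter_upwards [eventually_gt_atTop 0] with n hn
  have hn' : (0 : ℝ) < n := Nat.cast_pos.2 hn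
  have hA := prod_ascPochhammer_eval_mul_prod_GammaSeq has hn
  have hB := prod_ascPochhammer_eval_mul_prod_GammaSeq hbs hn
  have hΓ : (bs.map (Gamma <| · + ((n + 1 : ℕ) : ℝ))).prod =
      (bs.map (ascPochhammer ℝ (n + 1)).eval).prod * (bs.map Gamma).prod := by
    rw [← Multiset.prod_map_mul]
    exact congrArg _ (Multiset.map_congr rfl fun b hb ↦
      Gamma_add_nat_eq_ascPochhammer_mul (hbs b hb) _)
  have hA_ne := right_ne_zero_of_mul (hA.trans_ne (by positivity))
  have hB_ne := right_ne_zero_of_mul (hB.trans_ne (by positivity))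
  have hΓ_ne := (prod_Gamma_pos hbs).ne'
  rw [regularizedHGCoeff, hΓ, rpow_sub hn', Nat.factorial_succ, eq_div_of_mul_eq hA_ne hA,
    eq_div_of_mul_eq hB_ne hB, hcard]
  push_cast
  field_simp
  ring

theorem not_summable_regularizedHGCoeff (hcard : as.card = bs.card + 1) (has : ∀ a ∈ as, 0 < a)
    (hbs : ∀ b ∈ bs, 0 < b) (hsum : bs.sum ≤ as.sum) : ¬ Summable (regularizedHGCoeff as bs) := by
  intro hsummable
  have hL : 0 < (as.map Gamma).prod⁻¹ :=
    inv_pos.2 <| Multiset.prod_pos (by simpa using fun a ha ↦ Gamma_pos_of_pos (has a ha))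
  set L := (as.map Gamma).prod⁻¹
  have hlower : ∀ᶠ n : ℕ in atTop,
      L / 2 * (1 / (n + 1 : ℝ)) ≤ regularizedHGCoeff as bs (n + 1) := by
    filter_upwards [(tendsto_mul_regularizedHGCoeff hcard has hbs).eventually
      (eventually_ge_nhds (half_lt_self hL)), eventually_ge_atTop 1] with n hn hn1
    have hpow : (n : ℝ) ^ (bs.sum - as.sum) ≤ 1 :=
      rpow_le_one_of_one_le_of_nonpos (Nat.one_le_cast.2 hn1) (sub_nonpos.2 hsum)
    rw [mul_one_div, div_le_iff₀' (by positivity)]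
    refine hn.trans (mul_le_mul_of_nonneg_right ?_ (regularizedHGCoeff_pos has hbs _).le)
    exact mul_le_of_le_one_right (by positivity) hpow
  have hharm : Summable fun n : ℕ ↦ L / 2 * (1 / (n + 1 : ℝ)) :=
    ((summable_nat_add_iff 1).2 hsummable).of_norm_bounded_eventually_nat <|
      hlower.mono fun n hn ↦ by rwa [norm_of_nonneg (by positivity)]
  rw [summable_mul_left_iff (half_pos hL).ne'] at hharm
  exact not_summable_one_div_natCast ((summable_nat_add_iff 1).1 (mod_cast hharm))

end CoefficientAsymptotics

section HolomorphicExtension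

theorem mgf_withDensity_ofReal {Ω : Type*} [MeasurableSpace Ω] {μ : Measure Ω} {w : Ω → ℝ}
    (hw : Measurable w) (hw0 : 0 ≤ᵐ[μ] w) (X : Ω → ℝ) (t : ℝ) :
    mgf X (μ.withDensity fun ω ↦ ENNReal.ofReal (w ω)) t = ∫ ω, exp (t * X ω) * w ω ∂μ := by
  rw [mgf, integral_withDensity_eq_integral_toReal_smul hw.ennreal_ofReal
    (ae_of_all _ fun ω ↦ ENNReal.ofReal_lt_top)]
  refine integral_congr_ae (hw0.mono fun ω hω ↦ ?_)
  simp only [ENNReal.toReal_ofReal hω, smul_eq_mul, mul_comm]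

theorem differentiableOn_tsum_mul_pow {c : ℕ → ℝ}
    (hc : ∀ r ∈ Ioo (0 : ℝ) 1, Summable fun k ↦ |c k * r ^ k|) :
    DifferentiableOn ℂ (fun z : ℂ ↦ ∑' k, (c k : ℂ) * z ^ k) (Metric.ball 0 1) := by
  intro z hz
  obtain ⟨r, hzr, hr1⟩ := exists_between (mem_ball_zero_iff.1 hz)
  have hr0 : 0 < r := (norm_nonneg z).trans_lt hzr
  refine (DifferentiableOn.differentiableAt (s := Metric.ball 0 r) ?_
    (Metric.isOpen_ball.mem_nhds (mem_ball_zero_iff.2 hzr))).differentiableWithinAt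
  refine Complex.differentiableOn_tsum_of_summable_norm (hc r ⟨hr0, hr1⟩) (fun k ↦ by fun_prop)
    Metric.isOpen_ball fun k w hw ↦ ?_
  rw [norm_mul, norm_pow, Complex.norm_real, norm_eq_abs, abs_mul, abs_pow, abs_of_pos hr0]
  gcongr
  exact (mem_ball_zero_iff.1 hw).le

theorem eqOn_of_eventuallyEq_ofReal {f g : ℂ → ℂ} {U : Set ℂ} (hf : AnalyticOnNhd ℂ f U)
    (hg : AnalyticOnNhd ℂ g U) (hU : IsPreconnected U) {x : ℝ} (hx : (x : ℂ) ∈ U)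
    (hfg : ∀ᶠ y : ℝ in 𝓝 x, f y = g y) : EqOn f g U := by
  have hofReal : Tendsto Complex.ofReal (𝓝[≠] x) (𝓝[≠] (x : ℂ)) :=
    tendsto_nhdsWithin_of_tendsto_nhds_of_eventually_within _
      (Complex.continuous_ofReal.tendsto' _ _ rfl |>.mono_left nhdsWithin_le_nhds)
      (eventually_mem_nhdsWithin.mono fun y hy ↦ Complex.ofReal_injective.ne hy)
  exact hf.eqOn_of_preconnected_of_frequently_eq hg hU hx <|
    hofReal.frequently (hfg.filter_mono nhdsWithin_le_nhds).frequently

variable {Ω : Type*} [MeasurableSpace Ω] {μ : Measure Ω} [IsFiniteMeasure μ] {X : Ω → ℝ}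

theorem norm_complexMGF_le_measureReal_univ (hX : ∀ᵐ ω ∂μ, X ω ≤ 0) {z : ℂ} (hz : 0 ≤ z.re) :
    ‖complexMGF X μ z‖ ≤ μ.real univ := by
  rw [← one_mul (μ.real univ)]
  refine norm_integral_le_of_norm_le_const (hX.mono fun ω hω ↦ ?_)
  rw [Complex.norm_exp, Complex.re_mul_ofReal]
  exact exp_le_one_iff.2 (mul_nonpos_of_nonneg_of_nonpos hz hω)

theorem mem_interior_integrableExpSet_of_pos (hXm : AEMeasurable X μ) (hX : ∀ᵐ ω ∂μ, X ω ≤ 0)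
    {t : ℝ} (ht : 0 < t) : t ∈ interior (integrableExpSet X μ) :=
  mem_interior.2 ⟨Ioi 0, fun _ hs ↦ integrable_exp_mul_of_le _ 0 (le_of_lt hs) hXm hX,
    isOpen_Ioi, ht⟩

variable {F : ℂ → ℂ} {σ : ℝ}

theorem complexMGF_inv_eq_cpow_mul (hXm : AEMeasurable X μ) (hX : ∀ᵐ ω ∂μ, X ω ≤ 0)
    (hF : DifferentiableOn ℂ F (Metric.ball 0 1))
    (hmgf : ∀ r ∈ Ioo (0 : ℝ) 1, (mgf X μ r⁻¹ : ℂ) = (r : ℂ) ^ (σ : ℂ) * F r) {w : ℂ}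
    (hw : w ∈ Metric.ball 0 1) (hre : 0 < w.re) :
    complexMGF X μ w⁻¹ = w ^ (σ : ℂ) * F w := by
  set U : Set ℂ := Metric.ball 0 1 ∩ {w | 0 < w.re}
  have hU : IsOpen U := Metric.isOpen_ball.inter (isOpen_lt continuous_const Complex.continuous_re)
  have hconv : Convex ℝ U := (convex_ball 0 1).inter (convex_halfSpace_re_gt 0)
  have hleft : DifferentiableOn ℂ (fun w ↦ complexMGF X μ w⁻¹) U := by
    refine differentiableOn_complexMGF.comp (differentiableOn_inv.mono fun w hw h0 ↦ ?_) ?_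
    · simpa [h0] using hw.2
    · intro w hw
      refine mem_interior_integrableExpSet_of_pos hXm hX ?_
      rw [Complex.inv_re]
      exact div_pos hw.2 (Complex.normSq_pos.2 fun h0 ↦ by simpa [h0] using hw.2)
  have hright : DifferentiableOn ℂ (fun w ↦ w ^ (σ : ℂ) * F w) U :=
    (differentiableOn_id.cpow_const fun w hw ↦ Or.inl hw.2).mul (hF.mono inter_subset_left)
  refine eqOn_of_eventuallyEq_ofReal (hleft.analyticOnNhd hU) (hright.analyticOnNhd hU)
    hconv.isPreconnected (x := 1 / 2) ?_ ?_ ⟨hw, hre⟩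
  · constructor
    · norm_num
    · norm_num
  · filter_upwards [Ioo_mem_nhds (by norm_num : (0 : ℝ) < 1 / 2) (by norm_num : (1 / 2 : ℝ) < 1)]
      with r hr
    rw [← hmgf r hr, ← complexMGF_ofReal, Complex.ofReal_inv]

theorem rpow_mul_norm_le_measureReal_univ (hXm : AEMeasurable X μ) (hX : ∀ᵐ ω ∂μ, X ω ≤ 0)
    (hF : DifferentiableOn ℂ F (Metric.ball 0 1))
    (hmgf : ∀ r ∈ Ioo (0 : ℝ) 1, (mgf X μ r⁻¹ : ℂ) = (r : ℂ) ^ (σ : ℂ) * F r) {r : ℝ}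
    (hr : r ∈ Ioo 0 1) : r ^ σ * ‖F (r * Complex.I)‖ ≤ μ.real univ := by
  have hnorm : ‖r * Complex.I‖ = r := by simp [abs_of_pos hr.1]
  have hball : r * Complex.I ∈ Metric.ball 0 1 := mem_ball_zero_iff.2 (hnorm.trans_lt hr.2)
  have hcont : ContinuousAt (fun w : ℂ ↦ w ^ (σ : ℂ) * F w) (r * Complex.I) :=
    (continuousAt_cpow_const (Or.inr (by simpa using hr.1.ne'))).mul
      (hF.continuousOn.continuousAt (Metric.isOpen_ball.mem_nhds hball))
  have hpath : Tendsto (fun ε : ℝ ↦ (ε + r * Complex.I : ℂ)) (𝓝[>] 0) (𝓝 (r * Complex.I)) :=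
    (Continuous.tendsto' (by fun_prop) _ _ (by simp)).mono_left nhdsWithin_le_nhds
  have hlim := (hcont.tendsto.comp hpath).norm
  rw [norm_mul, Complex.norm_cpow_real, hnorm] at hlim
  refine le_of_tendsto hlim ?_
  filter_upwards [self_mem_nhdsWithin, hpath.eventually (Metric.isOpen_ball.mem_nhds hball)]
    with ε (hε : 0 < ε) hmem
  have hre : (ε + r * Complex.I : ℂ).re = ε := by simp
  rw [Function.comp_apply, ← complexMGF_inv_eq_cpow_mul hXm hX hF hmgf hmem (hre.symm ▸ hε)]
  refine norm_complexMGF_le_measureReal_univ hX ?_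
  rw [Complex.inv_re, hre]
  exact div_nonneg hε.le (Complex.normSq_nonneg _)

variable {c : ℕ → ℝ}

-- Evaluating at `w = r * I` removes the alternating signs, as `-w ^ 2 = r ^ 2`.
theorem rpow_mul_tsum_le_measureReal_univ (hXm : AEMeasurable X μ) (hX : ∀ᵐ ω ∂μ, X ω ≤ 0)
    (hc : ∀ r ∈ Ioo (0 : ℝ) 1, Summable fun k ↦ |c k * r ^ k|)
    (hmgf : ∀ r ∈ Ioo (0 : ℝ) 1, mgf X μ r⁻¹ = r ^ σ * ∑' k, c k * (-r ^ 2) ^ k) {r : ℝ}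
    (hr : r ∈ Ioo 0 1) : r ^ σ * ∑' k, c k * (r ^ 2) ^ k ≤ μ.real univ := by
  have hF : DifferentiableOn ℂ (fun w : ℂ ↦ ∑' k, (c k : ℂ) * (-w ^ 2) ^ k) (Metric.ball 0 1) := by
    refine (differentiableOn_tsum_mul_pow hc).comp (f := fun w ↦ -w ^ 2) (by fun_prop) fun w hw ↦ ?_
    rw [mem_ball_zero_iff] at hw ⊢
    rw [norm_neg, norm_pow]
    exact pow_lt_one₀ (norm_nonneg w) hw two_ne_zero
  have hmgf' (s : ℝ) (hs : s ∈ Ioo (0 : ℝ) 1) :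
      (mgf X μ s⁻¹ : ℂ) = (s : ℂ) ^ (σ : ℂ) * ∑' k, (c k : ℂ) * (-(s : ℂ) ^ 2) ^ k := by
    rw [hmgf s hs, ← Complex.ofReal_cpow hs.1.le]
    push_cast
    rfl
  have hreal : ∑' k, (c k : ℂ) * (-(r * Complex.I) ^ 2) ^ k =
      ((∑' k, c k * (r ^ 2) ^ k : ℝ) : ℂ) := by
    rw [mul_pow, Complex.I_sq, mul_neg_one, neg_neg]
    push_cast
    rfl
  have hle := rpow_mul_norm_le_measureReal_univ hXm hX hF hmgf' hr
  rw [hreal, Complex.norm_real] at hle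
  exact (mul_le_mul_of_nonneg_left (le_norm_self _) (rpow_nonneg hr.1.le σ)).trans hle

theorem summable_of_mgf_inv_eq (hXm : AEMeasurable X μ) (hX : ∀ᵐ ω ∂μ, X ω ≤ 0)
    (hc0 : ∀ k, 0 ≤ c k) (hc : ∀ r ∈ Ioo (0 : ℝ) 1, Summable fun k ↦ |c k * r ^ k|)
    (hmgf : ∀ r ∈ Ioo (0 : ℝ) 1, mgf X μ r⁻¹ = r ^ σ * ∑' k, c k * (-r ^ 2) ^ k) :
    Summable c := by
  refine summable_of_sum_range_le hc0 (c := μ.real univ) fun N ↦ ?_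
  have hlim : Tendsto (fun r : ℝ ↦ r ^ σ * ∑ k ∈ Finset.range N, c k * (r ^ 2) ^ k) (𝓝[<] 1)
      (𝓝 (1 ^ σ * ∑ k ∈ Finset.range N, c k * (1 ^ 2) ^ k)) :=
    ((continuousAt_rpow_const _ _ (Or.inl one_ne_zero)).mul (by fun_prop)).tendsto.mono_left
      nhdsWithin_le_nhds
  simp only [one_rpow, one_pow, one_mul, mul_one] at hlim
  refine le_of_tendsto hlim ?_
  filter_upwards [Ioo_mem_nhdsLT one_pos] with r hr
  have hr2 : r ^ 2 ∈ Ioo 0 1 := ⟨pow_pos hr.1 2, pow_lt_one₀ hr.1.le hr.2 two_ne_zero⟩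
  have hpartial : ∑ k ∈ Finset.range N, c k * (r ^ 2) ^ k ≤ ∑' k, c k * (r ^ 2) ^ k :=
    (hc _ hr2).of_abs.sum_le_tsum _ fun k _ ↦ mul_nonneg (hc0 k) (pow_nonneg hr2.1.le k)
  exact (mul_le_mul_of_nonneg_left hpartial (rpow_nonneg hr.1.le σ)).trans
    (rpow_mul_tsum_le_measureReal_univ hXm hX hc hmgf hr)

end HolomorphicExtension

section MellinTransform

variable {p q r s : ℝ}

theorem lintegral_comp_rpow_Ioi (f : ℝ → ENNReal) (hp : p ≠ 0) :
    ∫⁻ x in Ioi 0, ENNReal.ofReal (|p| * x ^ (p - 1)) * f (x ^ p) = ∫⁻ x in Ioi 0, f x := by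
  have himage : (· ^ p) '' Ioi 0 = Ioi (0 : ℝ) := by
    refine Subset.antisymm (image_subset_iff.2 fun x hx ↦ rpow_pos_of_pos hx p) fun y hy ↦ ?_
    exact ⟨y ^ p⁻¹, rpow_pos_of_pos hy _, rpow_inv_rpow (le_of_lt hy) hp⟩
  have hsubst := lintegral_image_eq_lintegral_abs_deriv_mul measurableSet_Ioi
    (fun x hx ↦ (hasDerivAt_rpow_const (Or.inl (ne_of_gt hx))).hasDerivWithinAt)
    ((rpow_left_injOn hp).mono Ioi_subset_Ici_self) f
  rw [← himage, hsubst, himage]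
  refine setLIntegral_congr_fun measurableSet_Ioi fun x hx ↦ ?_
  rw [abs_mul, abs_of_pos (rpow_pos_of_pos hx _)]

theorem lintegral_rpow_mul_exp_neg_mul (hp : 0 < p) (hr : 0 < r) :
    ∫⁻ x in Ioi 0, ENNReal.ofReal (x ^ (p - 1) * exp (-(r * x))) =
      ENNReal.ofReal (Gamma p / r ^ p) := by
  have hval := integral_rpow_mul_exp_neg_mul_Ioi hp hr
  have hpos : 0 < (1 / r) ^ p * Gamma p := by positivity
  rw [← ofReal_integral_eq_lintegral_ofReal (.of_integral_ne_zero (hval.trans_ne hpos.ne')) ?_,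
    hval, one_div, inv_rpow hr.le, inv_mul_eq_div]
  exact (ae_restrict_mem measurableSet_Ioi).mono fun x hx ↦
    mul_nonneg (rpow_nonneg (le_of_lt hx) _) (exp_pos _).le

theorem lintegral_rpow_mul_exp_neg_div (hs : 0 < s) (hr : 0 < r) :
    ∫⁻ x in Ioi 0, ENNReal.ofReal (x ^ (-s - 1) * exp (-(r / x))) =
      ENNReal.ofReal (Gamma s / r ^ s) := by
  rw [← lintegral_comp_rpow_Ioi _ (by norm_num : (-1 : ℝ) ≠ 0),
    ← lintegral_rpow_mul_exp_neg_mul hs hr]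
  refine setLIntegral_congr_fun measurableSet_Ioi fun x (hx : 0 < x) ↦ ?_
  rw [← ENNReal.ofReal_mul (by positivity), ← mul_assoc, abs_neg, abs_one, one_mul,
    ← rpow_mul hx.le, ← rpow_add hx, rpow_neg_one, div_inv_eq_mul]
  ring_nf

theorem lintegral_rpow_mul_gammaPDF (hp : 0 < p) (hsp : s < p) {x : ℝ} (hx : 0 < x) :
    ∫⁻ r in Ioi 0, ENNReal.ofReal (r ^ (-s - 1)) * gammaPDF p r x =
      ENNReal.ofReal (Gamma (p - s) / Gamma p) * ENNReal.ofReal (x ^ (s - 1)) := by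
  have hps : 0 < p - s := sub_pos.2 hsp
  have hgamma {r : ℝ} (hr : 0 < r) : ENNReal.ofReal (r ^ (-s - 1)) * gammaPDF p r x =
      ENNReal.ofReal (x ^ (p - 1) / Gamma p) *
        ENNReal.ofReal (r ^ (p - s - 1) * exp (-(x * r))) := by
    rw [gammaPDF_of_nonneg hx.le, ← ENNReal.ofReal_mul (by positivity),
      ← ENNReal.ofReal_mul (by positivity), show p - s - 1 = -s - 1 + p by ring, rpow_add hr]
    ring_nf
  rw [setLIntegral_congr_fun measurableSet_Ioi fun r hr ↦ hgamma hr,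
    lintegral_const_mul _ (by fun_prop), lintegral_rpow_mul_exp_neg_mul hps hx,
    ← ENNReal.ofReal_mul (by positivity), ← ENNReal.ofReal_mul (by positivity),
    show s - 1 = p - 1 - (p - s) by ring, rpow_sub hx (p - 1)]
  ring_nf

theorem measurable_gammaPDF_uncurry (p : ℝ) :
    Measurable fun z : ℝ × ℝ ↦ gammaPDF p z.1 z.2 :=
  (Measurable.ite (measurableSet_le measurable_const measurable_snd) (by fun_prop)
    measurable_const).ennreal_ofReal

-- `∫ x, f x ∂gammaMeasure p r` is a multiplicative convolution in `r`, so its Mellin transform is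
-- that of `f` times a ratio of Gamma values.
theorem lintegral_rpow_mul_lintegral_gammaMeasure (hp : 0 < p) (hsp : s < p) {f : ℝ → ENNReal}
    (hf : Measurable f) :
    ∫⁻ r in Ioi 0, ENNReal.ofReal (r ^ (-s - 1)) * ∫⁻ x, f x ∂gammaMeasure p r =
      ENNReal.ofReal (Gamma (p - s) / Gamma p) *
        ∫⁻ x in Ioi 0, ENNReal.ofReal (x ^ (s - 1)) * f x := by
  have hweight (x : ℝ) : Measurable fun r ↦ ENNReal.ofReal (r ^ (-s - 1)) * gammaPDF p r x :=
    .mul (by fun_prop) ((measurable_gammaPDF_uncurry p).comp measurable_prodMk_right)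
  have hmeas : Measurable fun z : ℝ × ℝ ↦
      ENNReal.ofReal (z.1 ^ (-s - 1)) * (gammaPDF p z.1 z.2 * f z.2) :=
    .mul (by fun_prop) ((measurable_gammaPDF_uncurry p).mul (hf.comp measurable_snd))
  calc ∫⁻ r in Ioi 0, ENNReal.ofReal (r ^ (-s - 1)) * ∫⁻ x, f x ∂gammaMeasure p r
      = ∫⁻ r in Ioi 0, ∫⁻ x in Ioi 0, ENNReal.ofReal (r ^ (-s - 1)) * (gammaPDF p r x * f x) := by
        refine lintegral_congr fun r ↦ ?_
        rw [gammaMeasure_eq_withDensity_restrict,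
          lintegral_withDensity_eq_lintegral_mul _ (measurable_gammaPDF p r) hf,
          ← lintegral_const_mul _ ((measurable_gammaPDF p r).mul hf)]
        rfl
    _ = ∫⁻ x in Ioi 0, ∫⁻ r in Ioi 0, ENNReal.ofReal (r ^ (-s - 1)) * (gammaPDF p r x * f x) :=
        lintegral_lintegral_swap hmeas.aemeasurable
    _ = ∫⁻ x in Ioi 0, ENNReal.ofReal (Gamma (p - s) / Gamma p) *
          (ENNReal.ofReal (x ^ (s - 1)) * f x) := by
        refine setLIntegral_congr_fun measurableSet_Ioi fun x hx ↦ ?_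
        simp only [← mul_assoc]
        rw [lintegral_mul_const _ (hweight x),
          lintegral_rpow_mul_gammaPDF hp hsp hx]
    _ = _ := lintegral_const_mul _ (by fun_prop)

theorem lintegral_regularizedHG_neg_gammaMeasure {a b c : ℝ} (ha : 0 < a) (hab : a < b)
    (hc : 0 < c) (hnonneg : ∀ u, 0 < u → 0 ≤ regularizedHG {a} {b, c} (-u)) (hr : 0 < r) :
    ∫⁻ u, ENNReal.ofReal (regularizedHG {a} {b, c} (-u)) ∂gammaMeasure c r =
      ENNReal.ofReal (Gamma b * Gamma c)⁻¹ *
        ∫⁻ t, ENNReal.ofReal (exp (-(t / r))) ∂betaMeasure a (b - a) := by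
  have hba : 0 < b - a := sub_pos.2 hab
  have hb : 0 < b := ha.trans hab
  have laplace :=
    integral_regularizedHG_gammaMeasure (as := {a}) (bs := {b, c}) (by simp) hc hr (-1)
  have euler := integral_regularizedHG_betaMeasure (as := 0) (bs := 0) le_rfl ha hba (-1 / r)
  have hint := integrable_regularizedHG_gammaMeasure (as := {a}) (bs := {b, c}) (by simp) hc hr (-1)
  simp only [neg_one_mul] at laplace hint
  simp only [regularizedHG_zero_zero, add_sub_cancel, Multiset.cons_zero] at euler
  have hexp (t : ℝ) : exp (-1 / r * t) = exp (-(t / r)) := by ring_nf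
  simp only [hexp] at euler
  have := isProbabilityMeasureBeta ha hba
  have hint' : Integrable (fun t ↦ exp (-(t / r))) (betaMeasure a (b - a)) := by
    refine .of_bound (by fun_prop) 1 ((ae_mem_Ioo_betaMeasure _ _).mono fun t ht ↦ ?_)
    rw [norm_of_nonneg (exp_pos _).le, exp_le_one_iff, neg_nonpos]
    exact div_nonneg ht.1.le hr.le
  rw [← ofReal_integral_eq_lintegral_ofReal hint
    ((ae_pos_gammaMeasure c r).mono fun u hu ↦ hnonneg u hu), laplace,
    ← ofReal_integral_eq_lintegral_ofReal hint' (ae_of_all _ fun t ↦ (exp_pos _).le), euler,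
    ← ENNReal.ofReal_mul (by positivity), Multiset.pair_comm, Multiset.insert_eq_cons,
    regularizedHG_cons_cons hc]
  field_simp

theorem lintegral_rpow_mul_lintegral_exp_neg_div_betaMeasure_lt_top (hq : 0 < q) (hs : 0 < s)
    (hsp : s < p) :
    ∫⁻ r in Ioi 0, ENNReal.ofReal (r ^ (-s - 1)) *
      ∫⁻ t, ENNReal.ofReal (exp (-(t / r))) ∂betaMeasure p q < ⊤ := by
  have hp : 0 < p := hs.trans hsp
  have := isProbabilityMeasureBeta hp hq
  calc ∫⁻ r in Ioi 0, ENNReal.ofReal (r ^ (-s - 1)) *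
        ∫⁻ t, ENNReal.ofReal (exp (-(t / r))) ∂betaMeasure p q
      = ∫⁻ r in Ioi 0, ∫⁻ t, ENNReal.ofReal (r ^ (-s - 1) * exp (-(t / r))) ∂betaMeasure p q := by
        refine setLIntegral_congr_fun measurableSet_Ioi fun r (hr : 0 < r) ↦ ?_
        simp only [ENNReal.ofReal_mul (rpow_nonneg hr.le _)]
        rw [lintegral_const_mul _ (by fun_prop)]
    _ = ∫⁻ t, (∫⁻ r in Ioi 0, ENNReal.ofReal (r ^ (-s - 1) * exp (-(t / r)))) ∂betaMeasure p q :=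
        lintegral_lintegral_swap (by fun_prop)
    _ = ∫⁻ t, ENNReal.ofReal (Gamma s) * ENNReal.ofReal (t ^ (-s)) ∂betaMeasure p q := by
        refine lintegral_congr_ae ((ae_mem_Ioo_betaMeasure _ _).mono fun t ht ↦ ?_)
        simp only
        rw [lintegral_rpow_mul_exp_neg_div hs ht.1, ← ENNReal.ofReal_mul (by positivity),
          rpow_neg ht.1.le, div_eq_mul_inv]
    _ < ⊤ := by
        rw [lintegral_const_mul _ (by fun_prop), lintegral_rpow_betaMeasure hp hq (by linarith)]
        exact ENNReal.mul_lt_top ENNReal.ofReal_lt_top ENNReal.ofReal_lt_top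

theorem lintegral_rpow_mul_regularizedHG_neg_lt_top {a b c : ℝ} (hab : a < b)
    (hnonneg : ∀ u, 0 < u → 0 ≤ regularizedHG {a} {b, c} (-u)) (hs : 0 < s) (hsa : s < a)
    (hsc : s < c) :
    ∫⁻ u in Ioi 0, ENNReal.ofReal (u ^ (s - 1)) *
      ENNReal.ofReal (regularizedHG {a} {b, c} (-u)) < ⊤ := by
  have ha : 0 < a := hs.trans hsa
  have hc : 0 < c := hs.trans hsc
  have hmeas : Measurable fun u ↦ ENNReal.ofReal (regularizedHG {a} {b, c} (-u)) :=
    ((measurable_regularizedHG _ _).comp measurable_neg).ennreal_ofReal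
  have hcs : 0 < Gamma (c - s) / Gamma c :=
    div_pos (Gamma_pos_of_pos (sub_pos.2 hsc)) (Gamma_pos_of_pos hc)
  refine ENNReal.lt_top_of_mul_ne_top_right (a := ENNReal.ofReal (Gamma (c - s) / Gamma c)) ?_
    (ENNReal.ofReal_pos.2 hcs).ne'
  rw [← lintegral_rpow_mul_lintegral_gammaMeasure hc hsc hmeas,
    setLIntegral_congr_fun measurableSet_Ioi fun r hr ↦ congrArg _ <|
      lintegral_regularizedHG_neg_gammaMeasure ha hab hc hnonneg hr]
  simp only [mul_left_comm _ (ENNReal.ofReal (Gamma b * Gamma c)⁻¹)]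
  rw [lintegral_const_mul' _ _ ENNReal.ofReal_ne_top]
  exact ENNReal.mul_ne_top ENNReal.ofReal_ne_top
    (lintegral_rpow_mul_lintegral_exp_neg_div_betaMeasure_lt_top (sub_pos.2 hab) hs hsa).ne

end MellinTransform

section NegativeAxis

variable {a b c s : ℝ}

theorem lt_of_regularizedHG_nonneg (hb : 0 < b) (hc : 0 < c)
    (hnonneg : ∀ u, 0 < u → 0 ≤ regularizedHG {a} {b, c} (-u)) : a < b := by
  by_contra! hba
  obtain ⟨u, hu, hneg⟩ := exists_regularizedHG_neg hc
  exact hneg.not_ge <|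
    regularizedHG_nonneg_of_cons_cons (as := 0) (bs := {c}) (by simp) hb hba hnonneg hu

theorem lintegral_rpow_mul_regularizedHG_neg_sq_lt_top (hab : a < b)
    (hnonneg : ∀ u, 0 < u → 0 ≤ regularizedHG {a} {b, c} (-u)) (hs : 0 < s) (hsa : s < a)
    (hsc : s < c) :
    ∫⁻ v in Ioi 0, ENNReal.ofReal (v ^ (2 * s - 1) * regularizedHG {a} {b, c} (-v ^ 2)) < ⊤ := by
  have hmellin := lintegral_rpow_mul_regularizedHG_neg_lt_top hab hnonneg hs hsa hsc
  rw [← lintegral_comp_rpow_Ioi _ two_ne_zero] at hmellin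
  refine lt_of_le_of_lt (setLIntegral_mono' measurableSet_Ioi fun v (hv : 0 < v) ↦ ?_) hmellin
  have hpow : v ^ (2 - 1 : ℝ) * (v ^ (2 : ℝ)) ^ (s - 1) = v ^ (2 * s - 1) := by
    rw [← rpow_mul hv.le, ← rpow_add hv]
    ring_nf
  rw [← ENNReal.ofReal_mul (by positivity), ← ENNReal.ofReal_mul (by positivity), abs_two,
    ← mul_assoc, mul_assoc 2, hpow, rpow_two, mul_assoc]
  refine ENNReal.ofReal_le_ofReal (le_mul_of_one_le_left ?_ one_le_two)
  exact mul_nonneg (rpow_nonneg hv.le _) (hnonneg _ (pow_pos hv 2))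

theorem integral_exp_neg_div_mul_regularizedHG_neg_sq (hs : 0 < s) {r : ℝ} (hr : r ∈ Ioo 0 1) :
    ∫ v in Ioi 0, exp (-(2 / r * v)) *
        (v ^ (2 * s - 1) * regularizedHG {a} {b, c} (-v ^ 2)) =
      r ^ (2 * s) * (Gamma (2 * s) / 2 ^ (2 * s) *
        regularizedHG {s, s + 1 / 2, a} {b, c} (-r ^ 2)) := by
  have h4 : 4 / (2 / r) ^ 2 = r ^ 2 := by
    field_simp
    norm_num
  have hlaplace := integral_regularizedHG_sq_gammaMeasure (as := {a}) (bs := {b, c}) (x := -1)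
    (by simp) hs (div_pos two_pos hr.1)
    (by rw [h4, neg_one_mul, abs_neg, abs_of_pos (pow_pos hr.1 2)]
        exact pow_lt_one₀ hr.1.le hr.2 two_ne_zero)
  simp only [neg_one_mul, h4] at hlaplace
  rw [integral_gammaMeasure (by positivity) (div_pos two_pos hr.1)] at hlaplace
  have hr0 : 0 < r ^ (2 * s) := rpow_pos_of_pos hr.1 _
  have : 0 < Gamma (2 * s) := Gamma_pos_of_pos (by positivity)
  simp only [Multiset.insert_eq_cons] at hlaplace ⊢
  rw [← hlaplace, div_rpow two_pos.le hr.1.le]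
  field_simp

theorem summable_regularizedHGCoeff_of_nonneg (hab : a < b)
    (hnonneg : ∀ u, 0 < u → 0 ≤ regularizedHG {a} {b, c} (-u)) (hs : 0 < s) (hsa : s < a)
    (hsc : s < c) : Summable (regularizedHGCoeff {s, s + 1 / 2, a} {b, c}) := by
  have ha : 0 < a := hs.trans hsa
  set C := Gamma (2 * s) / 2 ^ (2 * s)
  have hC : 0 < C := div_pos (Gamma_pos_of_pos (by positivity)) (by positivity)
  set w : ℝ → ℝ := fun v ↦ v ^ (2 * s - 1) * regularizedHG {a} {b, c} (-v ^ 2)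
  have hw : Measurable w := by
    have := measurable_regularizedHG {a} {b, c}
    fun_prop
  have hw0 : 0 ≤ᵐ[volume.restrict (Ioi 0)] w :=
    (ae_restrict_mem measurableSet_Ioi).mono fun v (hv : 0 < v) ↦
      mul_nonneg (rpow_nonneg hv.le _) (hnonneg _ (pow_pos hv 2))
  set μ := (volume.restrict (Ioi 0)).withDensity fun v ↦ ENNReal.ofReal (w v)
  have : IsFiniteMeasure μ := isFiniteMeasure_withDensity
    (lintegral_rpow_mul_regularizedHG_neg_sq_lt_top hab hnonneg hs hsa hsc).ne
  have hX : ∀ᵐ v ∂μ, -2 * v ≤ 0 :=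
    (withDensity_absolutelyContinuous _ _).ae_le <|
      (ae_restrict_mem measurableSet_Ioi).mono fun v (hv : 0 < v) ↦ by linarith
  have hmgf (r : ℝ) (hr : r ∈ Ioo (0 : ℝ) 1) : mgf (fun v ↦ -2 * v) μ r⁻¹ =
      r ^ (2 * s) * ∑' k, C * regularizedHGCoeff {s, s + 1 / 2, a} {b, c} k * (-r ^ 2) ^ k := by
    have hexp (v : ℝ) : r⁻¹ * (-2 * v) = -(2 / r * v) := by ring
    simp only [μ, mgf_withDensity_ofReal hw hw0, hexp, mul_assoc C, tsum_mul_left]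
    exact integral_exp_neg_div_mul_regularizedHG_neg_sq hs hr
  refine (summable_mul_left_iff hC.ne').1 <| summable_of_mgf_inv_eq (by fun_prop) hX
    (fun k ↦ ?_) (fun r hr ↦ ?_) hmgf
  · refine mul_nonneg hC.le (regularizedHGCoeff_pos ?_ ?_ k).le
    · simpa using ⟨hs, by positivity, ha⟩
    · simpa using ⟨ha.trans hab, hs.trans hsc⟩
  · simp only [mul_assoc, abs_mul C]
    exact (summable_abs_regularizedHGCoeff_mul_pow_of_card_eq (by simp)
      (abs_lt.2 ⟨by linarith [hr.1], hr.2⟩)).mul_left _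

theorem three_mul_add_half_le_add_of_regularizedHG_nonneg (ha : 0 < a) (hab : a < b) (hac : a < c)
    (hnonneg : ∀ u, 0 < u → 0 ≤ regularizedHG {a} {b, c} (-u)) : 3 * a + 1 / 2 ≤ b + c := by
  by_contra! hlt
  obtain ⟨s, hs, hsa⟩ := exists_between (max_lt ha (by linarith : (b + c - a - 1 / 2) / 2 < a))
  obtain ⟨hs0, hsum⟩ := max_lt_iff.1 hs
  refine not_summable_regularizedHGCoeff (by simp) ?_ ?_ ?_
    (summable_regularizedHGCoeff_of_nonneg hab hnonneg hs0 hsa (hsa.trans hac))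
  · simpa using ⟨hs0, by positivity, ha⟩
  · simpa using ⟨ha.trans hab, ha.trans hac⟩
  · simp only [Multiset.insert_eq_cons, Multiset.sum_cons, Multiset.sum_singleton]
    linarith

end NegativeAxis

section Bessel

variable {α β γ x : ℝ}

theorem besselJ_eq_rpow_mul_regularizedHG (α : ℝ) {t : ℝ} (ht : 0 < t) :
    besselJ α t = (t / 2) ^ α * regularizedHG 0 {α + 1} (-(t / 2) ^ 2) := by
  rw [besselJ, regularizedHG, ← tsum_mul_left]
  refine tsum_congr fun k ↦ ?_
  rw [rpow_add (half_pos ht), rpow_mul_natCast (by positivity), rpow_two, neg_pow ((t / 2) ^ 2)]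
  simp only [regularizedHGCoeff, Multiset.map_zero, Multiset.prod_zero, Multiset.map_singleton,
    Multiset.prod_singleton, add_right_comm α]
  ring

theorem integral_Ioo_comp_div_sq (hx : 0 < x) (g : ℝ → ℝ) :
    ∫ t in Ioo 0 x, 2 * t / x ^ 2 * g ((t / x) ^ 2) = ∫ v in Ioo 0 1, g v := by
  have himage : (fun t ↦ (t / x) ^ 2) '' Ioo 0 x = Ioo 0 1 := by
    refine Subset.antisymm (image_subset_iff.2 fun t ht ↦ ?_) fun v hv ↦ ?_
    · have htx : 0 < t / x := div_pos ht.1 hx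
      exact ⟨pow_pos htx 2, pow_lt_one₀ htx.le ((div_lt_one hx).2 ht.2) two_ne_zero⟩
    · refine ⟨x * √v, ⟨mul_pos hx (sqrt_pos.2 hv.1), mul_lt_of_lt_one_right hx ?_⟩, ?_⟩
      · exact (sqrt_lt' one_pos).2 (by simpa using hv.2)
      · simp only [mul_div_cancel_left₀ _ hx.ne', sq_sqrt hv.1.le]
  have hderiv (t : ℝ) : HasDerivAt (fun t ↦ (t / x) ^ 2) (2 * t / x ^ 2) t := by
    refine (((hasDerivAt_id t).div_const x).pow 2).congr_deriv ?_
    push_cast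
    simp only [id, pow_one]
    ring
  have hinj : InjOn (fun t ↦ (t / x) ^ 2) (Ioo 0 x) := fun s hs t ht hst ↦
    (div_left_inj' hx.ne').1 <|
      (pow_left_inj₀ (div_pos hs.1 hx).le (div_pos ht.1 hx).le two_ne_zero).1 hst
  rw [← himage, integral_image_eq_integral_abs_deriv_smul measurableSet_Ioo
    (fun t _ ↦ (hderiv t).hasDerivWithinAt) hinj]
  refine setIntegral_congr_fun measurableSet_Ioo fun t ht ↦ ?_
  have : 0 < 2 * t / x ^ 2 := div_pos (mul_pos two_pos ht.1) (pow_pos hx 2)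
  simp only [abs_of_pos this, smul_eq_mul]

theorem integral_sq_sub_sq_rpow_mul_rpow_mul {p q : ℝ} (hp : 0 < p) (hq : 0 < q) (hx : 0 < x)
    (f : ℝ → ℝ) :
    ∫ t in (0 : ℝ)..x, (x ^ 2 - t ^ 2) ^ (q - 1) * t ^ (2 * p - 1) * f ((t / x) ^ 2) =
      beta p q / 2 * x ^ (2 * (p + q - 1)) * ∫ v, f v ∂betaMeasure p q := by
  rw [integral_betaMeasure hp hq, ← integral_Ioo_comp_div_sq hx,
    intervalIntegral.integral_of_le hx.le, integral_Ioc_eq_integral_Ioo, ← mul_assoc,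
    ← integral_const_mul]
  refine setIntegral_congr_fun measurableSet_Ioo fun t ⟨ht0, htx⟩ ↦ ?_
  have hsq : 0 < x ^ 2 - t ^ 2 := by nlinarith
  have hone_sub : 1 - (t / x) ^ 2 = (x ^ 2 - t ^ 2) / x ^ 2 := by field_simp
  have hpow {y : ℝ} (hy : 0 < y) (s : ℝ) : (y ^ 2) ^ s = y ^ (2 * s) := by
    rw [rpow_mul hy.le, rpow_two]
  have hbeta := beta_pos hp hq
  rw [hone_sub, div_pow, div_rpow (by positivity) (by positivity), div_rpow hsq.le (by positivity),
    hpow hx, hpow hx, hpow ht0, show 2 * (p + q - 1) = 2 * (p - 1) + 2 * (q - 1) + 2 by ring,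
    show 2 * p - 1 = 2 * (p - 1) + 1 by ring, rpow_add ht0, rpow_add hx, rpow_add hx, rpow_two,
    rpow_one]
  field_simp

theorem integral_rpow_mul_besselJ (hβ : β < α + 1) (hγ : -1 < γ) (hx : 0 < x) :
    ∫ t in (0 : ℝ)..x, (x ^ 2 - t ^ 2) ^ γ * t ^ (-β) * besselJ α t =
      Gamma ((α - β + 1) / 2) * Gamma (γ + 1) / 2 ^ (α + 1) * x ^ (α - β + 1 + 2 * γ) *
        regularizedHG {(α - β + 1) / 2} {α + 1, (α - β + 1) / 2 + γ + 1} (-(x / 2) ^ 2) := by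
  set a := (α - β + 1) / 2
  have ha : 0 < a := half_pos (by linarith)
  have hγ' : 0 < γ + 1 := by linarith
  have ha2 : 2 * a = α - β + 1 := mul_div_cancel₀ _ two_ne_zero
  have hJ {t : ℝ} (ht : 0 < t) : t ^ (-β) * besselJ α t =
      (2 ^ α)⁻¹ * (t ^ (2 * a - 1) * regularizedHG 0 {α + 1} (-(x / 2) ^ 2 * (t / x) ^ 2)) := by
    rw [besselJ_eq_rpow_mul_regularizedHG α ht, div_rpow ht.le two_pos.le,
      show 2 * a - 1 = -β + α by linarith, rpow_add ht,
      show -(x / 2) ^ 2 * (t / x) ^ 2 = -(t / 2) ^ 2 by field_simp]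
    ring
  have heuler := integral_sq_sub_sq_rpow_mul_rpow_mul ha hγ' hx
    fun v ↦ regularizedHG 0 {α + 1} (-(x / 2) ^ 2 * v)
  rw [integral_regularizedHG_betaMeasure (by simp) ha hγ', add_sub_cancel_right, ← add_assoc,
    Multiset.cons_zero, ← Multiset.insert_eq_cons, Multiset.pair_comm, beta, ← add_assoc,
    add_sub_cancel_right, mul_add, ha2] at heuler
  calc ∫ t in (0 : ℝ)..x, (x ^ 2 - t ^ 2) ^ γ * t ^ (-β) * besselJ α t
      = ∫ t in (0 : ℝ)..x, (2 ^ α)⁻¹ * ((x ^ 2 - t ^ 2) ^ γ * t ^ (2 * a - 1) *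
          regularizedHG 0 {α + 1} (-(x / 2) ^ 2 * (t / x) ^ 2)) := by
        rw [intervalIntegral.integral_of_le hx.le, intervalIntegral.integral_of_le hx.le]
        refine setIntegral_congr_fun measurableSet_Ioc fun t ht ↦ ?_
        rw [mul_assoc, hJ ht.1]
        ring
    _ = _ := by
        have hne : Gamma (a + γ + 1) ≠ 0 := (Gamma_pos_of_pos (by linarith)).ne'
        rw [intervalIntegral.integral_const_mul, ha2, heuler, rpow_add_one two_ne_zero]
        field_simp

end Bessel

theorem stmt14 (α β γ : ℝ) (hα : -1 < α) (hγ : -1 < γ) (hβ : β < α + 1)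
    (hpos : ∀ x : ℝ, 0 < x →
      0 ≤ ∫ t in (0 : ℝ)..x, (x ^ 2 - t ^ 2) ^ γ * t ^ (-β) * besselJ α t) :
    -(γ + 1 / 2) ≤ β ∧ -α - 1 < β ∧ β < α + 1 := by
  have hnonneg (u : ℝ) (hu : 0 < u) :
      0 ≤ regularizedHG {(α - β + 1) / 2} {α + 1, (α - β + 1) / 2 + γ + 1} (-u) := by
    have hx : 0 < 2 * √u := mul_pos two_pos (sqrt_pos.2 hu)
    have hint := hpos _ hx
    rw [integral_rpow_mul_besselJ hβ hγ hx, mul_div_cancel_left₀ _ two_ne_zero,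
      sq_sqrt hu.le] at hint
    have := Gamma_pos_of_pos (by linarith : 0 < (α - β + 1) / 2)
    have := Gamma_pos_of_pos (by linarith : 0 < γ + 1)
    exact nonneg_of_mul_nonneg_right hint (by positivity)
  have hab := lt_of_regularizedHG_nonneg (by linarith) (by linarith) hnonneg
  have hsum := three_mul_add_half_le_add_of_regularizedHG_nonneg (by linarith) hab (by linarith)
    hnonneg
  exact ⟨by linarith, by linarith, hβ⟩
end

section
/- Let γ > −1 and α > −1 be real numbers, and let β satisfy max(−(γ + 1/2), −((2γ+1)/(2γ+3))(α+1)) ≤ β < α + 1. Then ∫₀ˣ (x² − t²)^γ t^{−β} J_α(t) dt ≥ 0 for every x > 0; moreover, the inequality is strict for every x > 0 unless either (α = γ + 1/2 and β = −(γ + 1/2)) or (γ = −1/2 and β = 0). -/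
open Real

/-!
Expand `besselJ` and integrate termwise: with `2a = α - β + 1`, `2u = α + β + 1`, `v = γ + 1`, the
integral is a positive multiple of `₁F₂(a; u + a, v + a; -x² / 4)`, so the question is when this
function of `y = x² / 4` is positive. Gasper's idea is to write it as a sum of squares,
`₁F₂(a; u + a, v + a; -y) = ∑ₙ wₙ dₙ yⁿ ₀F₁(; σ + 1/2 + n; -y / 4)²` with
`2σ = u + v + a - 1 / 2` and `wₙ > 0`. The square of a `₀F₁` is a `₁F₂`, so inverting a triangular
system gives `n! dₙ` as a terminating balanced `₄F₃(1)`. Whipple's transformation turns this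
series into a positive multiple of a convolution of `₂F₁` coefficients, in two ways because two of
its numerator parameters can be exchanged:

* if `(σ - u) (σ - v) ≥ 0`, all terms of one convolution are nonnegative for `a ≤ σ`;
* if `(σ - u) (σ - v) ≤ 0`, the other convolution is the coefficient sequence `eₙ` of
  `₂F₁(a, -1/2; σ; x) ₂F₁(u, v; σ; x)`. Among its terms only the one with index `0` in the first
  factor is positive, and comparing all terms with that one in the recursion for `(n + 1) eₙ₊₁`
  gives `(n + 1) eₙ₊₁ ≥ n eₙ`, provided `e₁ = (u v - a / 2) / σ ≥ 0`.

The two conditions `a ≤ σ` and `a / 2 ≤ u v` are the two lower bounds on `β`. Unless both are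
equalities, two consecutive `dₙ` are positive; since consecutive Bessel functions have no common
zero, one of the two corresponding squares is positive and so is the sum.
-/

open Finset hiding antidiagonal mem_antidiagonal
open Finset.HasAntidiagonal MeasureTheory
open scoped Nat

section Antidiagonal

variable {M : Type*} [AddCommMonoid M]

lemma sum_antidiagonal_antidiagonal_assoc (f : ℕ → ℕ → ℕ → M) (n : ℕ) :
    ∑ p ∈ antidiagonal n, ∑ q ∈ antidiagonal p.1, f q.1 q.2 p.2 =
      ∑ p ∈ antidiagonal n, ∑ q ∈ antidiagonal p.2, f p.1 q.1 q.2 := by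
  rw [sum_sigma', sum_sigma']
  refine sum_nbij' (fun x ↦ ⟨(x.2.1, x.2.2 + x.1.2), (x.2.2, x.1.2)⟩)
    (fun x ↦ ⟨(x.1.1 + x.2.1, x.2.2), (x.1.1, x.2.1)⟩) ?_ ?_ ?_ ?_ ?_ <;>
  rintro ⟨⟨i, j⟩, ⟨k, l⟩⟩ <;> simp only [mem_sigma, mem_antidiagonal] <;>
  rintro ⟨rfl, rfl⟩ <;> simp [add_assoc]

lemma sum_antidiagonal_succ_of_pascal {T F G : ℕ → ℕ → M} (h₁ : ∀ m, T 0 (m + 1) = F 0 m)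
    (h₂ : ∀ j, T (j + 1) 0 = G j 0)
    (h₃ : ∀ j m, T (j + 1) (m + 1) = F (j + 1) m + G j (m + 1)) (n : ℕ) :
    ∑ p ∈ antidiagonal (n + 1), T p.1 p.2 =
      ∑ p ∈ antidiagonal n, (F p.1 p.2 + G p.1 p.2) := by
  rw [sum_add_distrib]
  cases n with
  | zero => simp [Nat.sum_antidiagonal_succ, h₁, h₂]
  | succ n =>
    rw [Nat.sum_antidiagonal_succ, Nat.sum_antidiagonal_succ', h₁, h₂, sum_congr rfl
      fun p _ ↦ h₃ p.1 p.2, sum_add_distrib, Nat.sum_antidiagonal_succ (f := fun p ↦ F p.1 p.2),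
      Nat.sum_antidiagonal_succ' (f := fun p ↦ G p.1 p.2)]
    abel

end Antidiagonal

section Pochhammer

/-- The rising factorial `(x)ₙ = x (x + 1) ⋯ (x + n - 1)`, as a value of the polynomial
`ascPochhammer`. -/
noncomputable def poch {R : Type*} [Semiring R] (x : R) (n : ℕ) : R :=
  (ascPochhammer R n).eval x

section Semiring

variable {R : Type*} [CommSemiring R]

@[simp]
lemma poch_zero (x : R) : poch x 0 = 1 := by
  simp [poch]

lemma poch_succ (x : R) (n : ℕ) : poch x (n + 1) = poch x n * (x + n) :=
  ascPochhammer_succ_eval n x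

lemma poch_add (x : R) (m n : ℕ) : poch x (m + n) = poch x m * poch (x + m) n := by
  simp [poch, ← ascPochhammer_mul, Polynomial.eval_comp]

lemma poch_succ_left (x : R) (n : ℕ) : poch x (n + 1) = x * poch (x + 1) n := by
  simp [add_comm n 1, poch_add, poch_succ]

end Semiring

lemma poch_reflect {R : Type*} [CommRing R] (x : R) (n : ℕ) :
    poch (1 - x - n) n = (-1) ^ n * poch x n := by
  rw [poch, poch, show 1 - x - n = -(x + n - 1) by ring, ascPochhammer_eval_neg_eq_descPochhammer,
    descPochhammer_eval_eq_ascPochhammer]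
  ring_nf

lemma poch_ne_zero {R : Type*} [CommRing R] [IsDomain R] {x : R} (hx : ∀ k : ℕ, x + k ≠ 0)
    (n : ℕ) : poch x n ≠ 0 := fun h ↦ by
  obtain ⟨k, -, hk⟩ := (ascPochhammer_eval_eq_zero_iff n x).mp h
  exact hx k (by rw [hk, add_neg_cancel])

section Ordered

variable {R : Type*} [CommRing R] [LinearOrder R] [IsStrictOrderedRing R] {x y : R}

lemma poch_pos (hx : 0 < x) (n : ℕ) : 0 < poch x n :=
  ascPochhammer_pos n x hx

lemma poch_nonneg (hx : 0 ≤ x) (n : ℕ) : 0 ≤ poch x n := by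
  induction n with
  | zero => simp
  | succ n ih => rw [poch_succ]; positivity

lemma poch_le_poch (hx : 0 ≤ x) (hxy : x ≤ y) (n : ℕ) : poch x n ≤ poch y n := by
  induction n with
  | zero => simp
  | succ n ih =>
    rw [poch_succ, poch_succ]
    have := poch_nonneg (hx.trans hxy) n
    gcongr

lemma pow_le_poch (hx : 0 ≤ x) (n : ℕ) : x ^ n ≤ poch x n := by
  induction n with
  | zero => simp
  | succ n ih =>
    rw [poch_succ, pow_succ]
    have := poch_nonneg hx n
    gcongr
    simp

lemma poch_mul_poch_nonneg (h : 0 ≤ x * y) (hxy : -1 ≤ x + y) (n : ℕ) :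
    0 ≤ poch x n * poch y n := by
  cases n with
  | zero => simp
  | succ n =>
    have hx : 0 ≤ x + 1 ∧ 0 ≤ y + 1 := by
      rcases nonneg_and_nonneg_or_nonpos_and_nonpos_of_mul_nonneg h with h | h <;>
      constructor <;> linarith [h.1, h.2]
    rw [poch_succ_left, poch_succ_left, mul_mul_mul_comm]
    exact mul_nonneg h (mul_nonneg (poch_nonneg hx.1 n) (poch_nonneg hx.2 n))

end Ordered

lemma poch_two_mul {K : Type*} [Field K] [NeZero (2 : K)] (x : K) (n : ℕ) :
    poch (2 * x) (2 * n) = 4 ^ n * poch x n * poch (x + 1 / 2) n := by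
  have h2 : (2 : K) ≠ 0 := two_ne_zero
  induction n with
  | zero => simp
  | succ n ih =>
    rw [show 2 * (n + 1) = 2 * n + 1 + 1 by ring, poch_succ, poch_succ, ih, poch_succ, poch_succ]
    push_cast
    field_simp
    ring

lemma Gamma_add_natCast {z : ℝ} (hz : 0 < z) (k : ℕ) : Gamma (z + k) = Gamma z * poch z k := by
  induction k with
  | zero => simp
  | succ k ih =>
    rw [poch_succ, Nat.cast_succ, ← add_assoc, Real.Gamma_add_one (by positivity), ih]
    ring

end Pochhammer

section Convolution

variable {K : Type*} [Field K]

lemma succ_mul_sum_antidiagonal {f g r s : ℕ → K} (hf : ∀ k : ℕ, (k + 1) * f (k + 1) = r k * f k)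
    (hg : ∀ k : ℕ, (k + 1) * g (k + 1) = s k * g k) (n : ℕ) :
    (n + 1) * ∑ p ∈ antidiagonal (n + 1), f p.1 * g p.2 =
      ∑ p ∈ antidiagonal n, (r p.1 + s p.2) * (f p.1 * g p.2) := by
  have h := sum_antidiagonal_succ_of_pascal (T := fun i j ↦ (i + j : K) * (f i * g j))
    (F := fun i j ↦ s j * (f i * g j)) (G := fun i j ↦ r i * (f i * g j))
    (fun m ↦ by push_cast; linear_combination f 0 * hg m)
    (fun j ↦ by push_cast; linear_combination g 0 * hf j)
    (fun j m ↦ by push_cast; linear_combination f (j + 1) * hg m + g (m + 1) * hf j) n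
  rw [mul_sum]
  calc _ = ∑ p ∈ antidiagonal (n + 1), (p.1 + p.2 : K) * (f p.1 * g p.2) :=
        sum_congr rfl fun p hp ↦ by
          rw [← Nat.cast_add, mem_antidiagonal.mp hp, Nat.cast_succ]
    _ = _ := h.trans (sum_congr rfl fun _ _ ↦ by ring)

variable [CharZero K]

theorem sum_antidiagonal_poch_div_factorial (x y : K) (n : ℕ) :
    ∑ p ∈ antidiagonal n, poch x p.1 / p.1 ! * (poch y p.2 / p.2 !) = poch (x + y) n / n ! := by
  have hrec (x : K) (k : ℕ) :
      ((k : K) + 1) * (poch x (k + 1) / (k + 1)!) = (x + k) * (poch x k / k !) := by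
    rw [poch_succ, Nat.factorial_succ]
    push_cast
    field_simp
  induction n with
  | zero => simp
  | succ n ih =>
    refine mul_left_cancel₀ (Nat.cast_add_one_ne_zero n : (n + 1 : K) ≠ 0) ?_
    refine (succ_mul_sum_antidiagonal (f := fun k ↦ poch x k / k !)
      (g := fun k ↦ poch y k / k !) (hrec x) (hrec y) n).trans ?_
    rw [hrec, ← ih, mul_sum]
    refine sum_congr rfl fun p hp ↦ ?_
    rw [← mem_antidiagonal.mp hp]
    push_cast
    ring

end Convolution

section Saalschutz

variable {K : Type*} [Field K] [CharZero K]

/-- The `(j, m)`-th term of the Pfaff–Saalschütz sum, multiplied by `(w)ⱼ₊ₘ` so that `w` may be a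
pole. -/
noncomputable def saalschutzTerm (u v w : K) (j m : ℕ) : K :=
  poch u j * poch v j * poch (w - u - v) m * poch (w + j) m / (j ! * m !)

lemma succ_mul_sum_saalschutzTerm (u v w : K) (n : ℕ) :
    (n + 1) * ∑ p ∈ antidiagonal (n + 1), saalschutzTerm u v w p.1 p.2 =
      (w - u + n) * (w - v + n) * ∑ p ∈ antidiagonal n, saalschutzTerm u v w p.1 p.2 := by
  have h := sum_antidiagonal_succ_of_pascal (T := fun j m ↦ (j + m : K) * saalschutzTerm u v w j m)
    (F := fun j m ↦
      ((w - u + (j + m)) * (w - v + (j + m)) - (u + j) * (v + j)) * saalschutzTerm u v w j m)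
    (G := fun j m ↦ (u + j) * (v + j) * saalschutzTerm u v w j m)
    (fun m ↦ by
      simp only [saalschutzTerm, poch_succ, Nat.factorial_succ]
      push_cast
      field_simp
      ring)
    (fun j ↦ by
      simp only [saalschutzTerm, poch_zero, poch_succ, Nat.factorial_succ]
      push_cast
      field_simp
      ring)
    (fun j m ↦ by
      simp only [saalschutzTerm, poch_succ_left (w + j), poch_succ (w + (j + 1 : ℕ)), poch_succ u,
        poch_succ v, poch_succ (w - u - v), Nat.factorial_succ]
      push_cast
      field_simp
      ring_nf)
    n
  rw [mul_sum, mul_sum]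
  calc _ = ∑ p ∈ antidiagonal (n + 1), (p.1 + p.2 : K) * saalschutzTerm u v w p.1 p.2 :=
        sum_congr rfl fun p hp ↦ by rw [← Nat.cast_add, mem_antidiagonal.mp hp, Nat.cast_succ]
    _ = _ := h.trans <| sum_congr rfl fun p hp ↦ by
        rw [← Nat.cast_add, mem_antidiagonal.mp hp]
        ring

theorem saalschutz (u v w : K) (n : ℕ) :
    ∑ p ∈ antidiagonal n, saalschutzTerm u v w p.1 p.2 =
      poch (w - u) n * poch (w - v) n / n ! := by
  induction n with
  | zero => simp [saalschutzTerm]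
  | succ n ih =>
    refine mul_left_cancel₀ (Nat.cast_add_one_ne_zero n : (n + 1 : K) ≠ 0) ?_
    rw [succ_mul_sum_saalschutzTerm, ih, poch_succ, poch_succ, Nat.factorial_succ]
    push_cast
    field_simp

end Saalschutz

section Whipple

variable {K : Type*} [Field K]

/-- The terminating sum `Σ_{k ≤ n} (-1)ᵏ (n + s - 1)ₖ tₖ / (k! (n - k)!)`. For `t` a quotient of
Pochhammer symbols it is `1 / n!` times a terminating hypergeometric series at `1`. -/
noncomputable def baileyTransform (s : K) (t : ℕ → K) (n : ℕ) : K :=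
  ∑ p ∈ antidiagonal n, (-1) ^ p.1 * poch (n + s - 1) p.1 / (p.1 ! * p.2 !) * t p.1

/-- The sequence `(A)ₖ (C)ₖ / ((σ)ₖ (b)ₖ (c)ₖ)`. Its Bailey transform is a terminating
`₄F₃(1)`. -/
noncomputable def pochQuotient (σ A C b c : K) (k : ℕ) : K :=
  poch A k * poch C k / (poch σ k * (poch b k * poch c k))

lemma pochQuotient_comm (σ A C b c : K) : pochQuotient σ A C b c = pochQuotient σ C A b c := by
  ext k
  rw [pochQuotient, pochQuotient, mul_comm (poch A k)]

lemma ordinaryHypergeometricCoefficient_eq (a b c : K) (n : ℕ) :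
    ordinaryHypergeometricCoefficient a b c n = poch a n * poch b n / (n ! * poch c n) := by
  simp only [ordinaryHypergeometricCoefficient, ← poch.eq_1, div_eq_mul_inv, mul_inv]
  ring

variable [CharZero K]

lemma saalschutz_balanced {b c : K} (hb : ∀ k : ℕ, b + k ≠ 0) (hc : ∀ k : ℕ, c + k ≠ 0) (A : K)
    (n : ℕ) :
    ∑ p ∈ antidiagonal n, (-1) ^ p.1 * poch A p.1 * poch (n - 1 + b + c - A) p.1 /
      (p.1 ! * p.2 ! * (poch b p.1 * poch c p.1)) =
      poch (b - A) n * poch (c - A) n / (n ! * (poch b n * poch c n)) := by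
  have h := saalschutz A (n - 1 + b + c - A) b n
  simp only [saalschutzTerm] at h
  rw [show b - (n - 1 + b + c - A) = 1 - (c - A) - n by ring, poch_reflect] at h
  have hsign (k : ℕ) : ((-1 : K) ^ k) * (-1) ^ k = 1 := pow_mul_pow_eq_one _ (by norm_num)
  have hbn := poch_ne_zero hb n
  have hcn := poch_ne_zero hc n
  calc _ = (-1) ^ n / (poch b n * poch c n) * ∑ p ∈ antidiagonal n,
        poch A p.1 * poch (n - 1 + b + c - A) p.1 * poch (b - A - (n - 1 + b + c - A)) p.2 *
          poch (b + p.1) p.2 / (p.1 ! * p.2 !) := by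
        rw [mul_sum]
        refine sum_congr rfl fun p hp ↦ ?_
        obtain ⟨k, m⟩ := p
        obtain rfl : k + m = n := mem_antidiagonal.mp hp
        dsimp only
        rw [show b - A - (((k + m : ℕ) : K) - 1 + b + c - A) = 1 - (c + k) - m by push_cast; ring,
          poch_reflect]
        rw [poch_add b] at hbn ⊢
        rw [poch_add c] at hcn ⊢
        obtain ⟨hb₁, hb₂⟩ := mul_ne_zero_iff.mp hbn
        obtain ⟨hc₁, hc₂⟩ := mul_ne_zero_iff.mp hcn
        rw [pow_add]
        field_simp
        rw [sq, hsign, mul_one]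
    _ = _ := by
        rw [h]
        field_simp
        rw [sq, hsign, one_mul]

lemma poch_mul_poch_div_eq_sum {σ : K} (hσ : ∀ k : ℕ, σ + k ≠ 0) (B C : K) (n : ℕ) :
    poch B n * poch C n / (n ! * poch σ n) =
      ∑ p ∈ antidiagonal n, ordinaryHypergeometricCoefficient (σ - B) (σ - C) σ p.1 *
        (poch (B + C - σ) p.2 / p.2 !) := by
  have h := saalschutz (σ - B) (σ - C) σ n
  simp only [saalschutzTerm] at h
  rw [sub_sub_cancel, sub_sub_cancel] at h
  have hσn := poch_ne_zero hσ n
  rw [mul_comm (n ! : K), ← div_div, div_right_comm, ← h, sum_div]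
  refine sum_congr rfl fun p hp ↦ ?_
  rw [← mem_antidiagonal.mp hp, poch_add] at hσn ⊢
  obtain ⟨h₁, h₂⟩ := mul_ne_zero_iff.mp hσn
  rw [ordinaryHypergeometricCoefficient_eq, show B - (σ - C) = B + C - σ by ring]
  field_simp

lemma baileyTransform_pochQuotient_eq_sum {σ b c : K} (hσ : ∀ k : ℕ, σ + k ≠ 0)
    (hb : ∀ k : ℕ, b + k ≠ 0) (hc : ∀ k : ℕ, c + k ≠ 0) (s A C : K) (n : ℕ) :
    baileyTransform s (pochQuotient σ A C b c) n = ∑ p ∈ antidiagonal n,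
      (-1) ^ p.1 * poch A p.1 / (poch b p.1 * poch c p.1) *
        ordinaryHypergeometricCoefficient (σ - (n + s - 1)) (σ - C) σ p.1 *
        ∑ q ∈ antidiagonal p.2, (-1) ^ q.1 * poch (A + p.1) q.1 * poch (n + s - 1 + C - σ) q.1 /
          (q.1 ! * q.2 ! * (poch (b + p.1) q.1 * poch (c + p.1) q.1)) := by
  calc _ = ∑ p ∈ antidiagonal n, ∑ q ∈ antidiagonal p.1,
        (-1) ^ (q.1 + q.2) * poch A (q.1 + q.2) / (poch b (q.1 + q.2) * poch c (q.1 + q.2)) *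
          (ordinaryHypergeometricCoefficient (σ - (n + s - 1)) (σ - C) σ q.1 *
            (poch (n + s - 1 + C - σ) q.2 / q.2 !)) / p.2 ! := by
        refine sum_congr rfl fun p _ ↦ ?_
        calc _ = (-1) ^ p.1 * poch A p.1 / (poch b p.1 * poch c p.1) *
              (poch (n + s - 1) p.1 * poch C p.1 / (p.1 ! * poch σ p.1)) / p.2 ! := by
              have := poch_ne_zero hσ p.1
              have := poch_ne_zero hb p.1
              have := poch_ne_zero hc p.1
              rw [pochQuotient]
              field_simp
          _ = _ := by
              rw [poch_mul_poch_div_eq_sum hσ, mul_sum, sum_div]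
              exact sum_congr rfl fun q hq ↦ by rw [mem_antidiagonal.mp hq]
    _ = _ := by
        rw [sum_antidiagonal_antidiagonal_assoc fun i j m ↦
          (-1) ^ (i + j) * poch A (i + j) / (poch b (i + j) * poch c (i + j)) *
            (ordinaryHypergeometricCoefficient (σ - (n + s - 1)) (σ - C) σ i *
              (poch (n + s - 1 + C - σ) j / j !)) / (m ! : K)]
        refine sum_congr rfl fun p _ ↦ ?_
        rw [mul_sum]
        refine sum_congr rfl fun q _ ↦ ?_
        rw [poch_add A, poch_add b, poch_add c, pow_add]
        simp only [div_eq_mul_inv, mul_inv]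
        ring

theorem whipple {σ b c A C : K} (hσ : ∀ k : ℕ, σ + k ≠ 0) (hb : ∀ k : ℕ, b + k ≠ 0)
    (hc : ∀ k : ℕ, c + k ≠ 0) (hbal : b + c = A + C + σ) (n : ℕ) :
    baileyTransform (2 * σ) (pochQuotient σ A C b c) n = poch σ n / (poch b n * poch c n) *
      ∑ p ∈ antidiagonal n, ordinaryHypergeometricCoefficient A (σ - C) σ p.1 *
        ordinaryHypergeometricCoefficient (b - A) (c - A) σ p.2 := by
  rw [baileyTransform_pochQuotient_eq_sum hσ hb hc, mul_sum]
  refine sum_congr rfl fun p hp ↦ ?_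
  obtain ⟨j, m⟩ := p
  obtain rfl : j + m = n := mem_antidiagonal.mp hp
  have shift {x : K} (hx : ∀ k : ℕ, x + k ≠ 0) (k : ℕ) : x + j + k ≠ 0 := by
    simpa [add_assoc] using hx (j + k)
  have hsum := saalschutz_balanced (shift hb) (shift hc) (A + j) m
  rw [show (m : K) - 1 + (b + j) + (c + j) - (A + j) = (j + m : ℕ) + 2 * σ - 1 + C - σ by
      push_cast; linear_combination hbal,
    add_sub_add_right_eq_sub, add_sub_add_right_eq_sub] at hsum
  have hreflect : poch (σ - ((j + m : ℕ) + 2 * σ - 1)) j = (-1) ^ j * poch (σ + m) j := by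
    rw [← poch_reflect]; congr 1; push_cast; ring
  have hsign : ((-1 : K) ^ j) * (-1) ^ j = 1 := pow_mul_pow_eq_one _ (by norm_num)
  have hσm : poch σ m * poch (σ + m) j = poch σ (j + m) := by rw [add_comm j m, poch_add]
  have := poch_ne_zero hσ j
  have := poch_ne_zero hσ m
  have := poch_ne_zero hb j
  have := poch_ne_zero hc j
  have := poch_ne_zero (shift hb) m
  have := poch_ne_zero (shift hc) m
  simp only [ordinaryHypergeometricCoefficient_eq]
  rw [hsum, hreflect, ← hσm, poch_add b, poch_add c]
  field_simp
  rw [sq, hsign, one_mul]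

end Whipple

section Inversion

variable {K : Type*} [Field K] [CharZero K]

/-- The factor `(s - 1)ₙ (s - 1 + 2n) / (s - 1)` of a very well-poised series, in a form that is
also valid for `s = 1`. -/
noncomputable def wellPoisedFactor (s : K) : ℕ → K
  | 0 => 1
  | n + 1 => (s + 2 * n + 1) * poch s n

lemma wellPoisedFactor_add_mul (s : K) (k r : ℕ) :
    wellPoisedFactor s (k + r) * poch ((k + r : ℕ) + s - 1) k =
      poch s (2 * k) * wellPoisedFactor (s + 2 * k) r := by
  rcases r with _ | r
  · rcases k with _ | k
    · simp [wellPoisedFactor]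
    · rw [add_zero, wellPoisedFactor, wellPoisedFactor, show 2 * (k + 1) = k + (k + 1) + 1 by omega,
        poch_succ, poch_succ, poch_add s k (k + 1), poch_succ (s + k),
        show ((k + 1 : ℕ) : K) + s - 1 = s + k by push_cast; ring]
      push_cast
      ring
  · have h : poch s (k + r) * poch (s + (k + r : ℕ)) k =
        poch s (2 * k) * poch (s + (2 * k : ℕ)) r := by
      rw [← poch_add, ← poch_add]; congr 1; ring
    rw [← add_assoc, wellPoisedFactor, wellPoisedFactor,
      show ((k + r + 1 : ℕ) : K) + s - 1 = s + (k + r : ℕ) by push_cast; ring]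
    push_cast at h ⊢
    linear_combination (s + 2 * (k + r) + 1) * h

lemma sum_range_wellPoisedFactor {s : K} (hs : ∀ k : ℕ, s + k ≠ 0) (R m : ℕ) :
    ∑ r ∈ range (R + 1), (-1) ^ r * wellPoisedFactor s r /
      (r ! * (R + m + 1 - r)! * poch s (R + m + 1 + r)) =
      (-1) ^ R * poch s R / (R ! * m ! * poch s (R + m + 1 + R) * (R + m + 1)) := by
  have hp (n : ℕ) : poch s n ≠ 0 := poch_ne_zero hs n
  induction R generalizing m with
  | zero =>
    have := hp (m + 1)
    simp only [zero_add, range_one, sum_singleton, wellPoisedFactor, poch_zero, pow_zero, add_zero,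
      Nat.sub_zero, Nat.factorial_succ]
    push_cast
    field_simp
    simp
  | succ R ih =>
    have h₁ : s + ((R + (m + 1) + 1 + R : ℕ) : K) ≠ 0 := hs _
    have h₂ : (R + (m + 1) + 1 : K) ≠ 0 := mod_cast Nat.succ_ne_zero (R + (m + 1))
    have := hp (R + (m + 1) + 1 + R)
    rw [sum_range_succ, show R + 1 + m + 1 = R + (m + 1) + 1 by ring, ih (m + 1),
      show R + (m + 1) + 1 - (R + 1) = m + 1 by omega, ← add_assoc (R + (m + 1) + 1), poch_succ s R,
      poch_succ s (R + (m + 1) + 1 + R), wellPoisedFactor, Nat.factorial_succ R,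
      Nat.factorial_succ m, pow_succ]
    push_cast at h₁ h₂ ⊢
    have h₃ : (R + 1 + m + 1 : K) ≠ 0 := by convert h₂ using 1; ring
    field_simp
    ring

lemma sum_antidiagonal_wellPoisedFactor {s : K} (hs : ∀ k : ℕ, s + k ≠ 0) (n : ℕ) :
    ∑ p ∈ antidiagonal n, (-1) ^ p.1 * wellPoisedFactor s p.1 /
      (p.1 ! * p.2 ! * poch s (n + p.1)) = if n = 0 then 1 else 0 := by
  rcases n with _ | n
  · simp [wellPoisedFactor]
  · have h := sum_range_wellPoisedFactor hs n 0
    have h₁ : s + ((n + 1 + n : ℕ) : K) ≠ 0 := hs _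
    have := poch_ne_zero hs (n + 1 + n)
    rw [Nat.sum_antidiagonal_eq_sum_range_succ fun i j ↦ (-1) ^ i * wellPoisedFactor s i /
      (i ! * j ! * poch s (n + 1 + i)), sum_range_succ]
    simp only [add_zero] at h
    rw [h, ← add_assoc (n + 1) n 1, poch_succ s (n + 1 + n), wellPoisedFactor,
      Nat.factorial_succ n, pow_succ]
    push_cast at h₁ ⊢
    simp only [Nat.sub_self, Nat.factorial_zero, Nat.cast_one, add_zero]
    field_simp
    ring

theorem sum_wellPoisedFactor_mul_baileyTransform {s : K} (hs : ∀ k : ℕ, s + k ≠ 0) (t : ℕ → K)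
    (n : ℕ) :
    ∑ p ∈ antidiagonal n, (-1) ^ p.1 * wellPoisedFactor s p.1 * baileyTransform s t p.1 /
      (p.2 ! * poch s (n + p.1)) = t n / n ! := by
  calc _ = ∑ p ∈ antidiagonal n, ∑ q ∈ antidiagonal p.1,
        (-1) ^ (q.1 + q.2) * wellPoisedFactor s (q.1 + q.2) / (p.2 ! * poch s (n + (q.1 + q.2))) *
          ((-1) ^ q.1 * poch ((q.1 + q.2 : ℕ) + s - 1) q.1 / (q.1 ! * q.2 !) * t q.1) := by
        refine sum_congr rfl fun p _ ↦ ?_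
        rw [baileyTransform, mul_div_right_comm, mul_sum]
        exact sum_congr rfl fun q hq ↦ by rw [mem_antidiagonal.mp hq]
    _ = ∑ p ∈ antidiagonal n, t p.1 / p.1 ! * if p.2 = 0 then 1 else 0 := by
        rw [sum_antidiagonal_antidiagonal_assoc fun i j m ↦
          (-1) ^ (i + j) * wellPoisedFactor s (i + j) / (m ! * poch s (n + (i + j))) *
            ((-1) ^ i * poch ((i + j : ℕ) + s - 1) i / (i ! * j !) * t i)]
        refine sum_congr rfl fun p hp ↦ ?_
        have hs' (j : ℕ) : s + 2 * p.1 + j ≠ 0 := by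
          simpa [add_assoc] using hs (2 * p.1 + j)
        rw [← sum_antidiagonal_wellPoisedFactor hs', mul_sum]
        refine sum_congr rfl fun q _ ↦ ?_
        have hsign : ((-1 : K) ^ p.1) * (-1) ^ p.1 = 1 := pow_mul_pow_eq_one _ (by norm_num)
        have hfactor := wellPoisedFactor_add_mul s p.1 q.1
        have := poch_ne_zero hs (2 * p.1)
        have := poch_ne_zero hs' (p.2 + q.1)
        rw [show n + (p.1 + q.1) = 2 * p.1 + (p.2 + q.1) by rw [← mem_antidiagonal.mp hp]; ring,
          poch_add s (2 * p.1), pow_add]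
        push_cast at hfactor ⊢
        field_simp
        rw [sq, hsign]
        linear_combination t p.1 / (p.1 ! * q.1 ! * q.2 !) * hfactor
    _ = _ := by
        rw [sum_eq_single (n, 0) (fun p hp hne ↦ ?_) (by simp), if_pos rfl, mul_one]
        rw [if_neg fun h₀ ↦ hne (Prod.ext (by rw [← mem_antidiagonal.mp hp, h₀, add_zero]) h₀),
          mul_zero]

end Inversion

section Positivity

variable {K : Type*} [Field K] [LinearOrder K] [IsStrictOrderedRing K] {σ a u v : K}

lemma ordinaryHypergeometricCoefficient_succ (hσ : 0 < σ) (x y : K) (k : ℕ) :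
    (k + 1) * ordinaryHypergeometricCoefficient x y σ (k + 1) =
      (x + k) * (y + k) / (σ + k) * ordinaryHypergeometricCoefficient x y σ k := by
  have := (poch_pos hσ k).ne'
  rw [ordinaryHypergeometricCoefficient_eq, ordinaryHypergeometricCoefficient_eq, poch_succ,
    poch_succ, poch_succ, Nat.factorial_succ]
  push_cast
  field_simp

lemma ordinaryHypergeometricCoefficient_zero_right (x y z : K) :
    ordinaryHypergeometricCoefficient x y z 0 = 1 := by
  simp [ordinaryHypergeometricCoefficient_eq]

lemma ordinaryHypergeometricCoefficient_pos {x y z : K} (hx : 0 < x) (hy : 0 < y) (hz : 0 < z)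
    (k : ℕ) : 0 < ordinaryHypergeometricCoefficient x y z k := by
  have := poch_pos hx k
  have := poch_pos hy k
  have := poch_pos hz k
  rw [ordinaryHypergeometricCoefficient_eq]
  positivity

lemma ordinaryHypergeometricCoefficient_neg_half_neg {x z : K} (hx : 0 < x) (hz : 0 < z) (k : ℕ) :
    ordinaryHypergeometricCoefficient x (-1 / 2) z (k + 1) < 0 := by
  have hx := poch_pos hx (k + 1)
  have hz := poch_pos hz (k + 1)
  have hhalf : 0 < poch (-1 / 2 + 1 : K) k := poch_pos (by norm_num) k
  rw [ordinaryHypergeometricCoefficient_eq, poch_succ_left (-1 / 2)]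
  exact div_neg_of_neg_of_pos
    (mul_neg_of_pos_of_neg hx (mul_neg_of_neg_of_pos (by norm_num) hhalf)) (by positivity)

/-- The coefficient of `xⁿ` in the product `₂F₁(a, -1/2; σ; x) ₂F₁(u, v; σ; x)`. -/
noncomputable def gasperConv (σ a u v : K) (n : ℕ) : K :=
  ∑ p ∈ antidiagonal n, ordinaryHypergeometricCoefficient a (-1 / 2) σ p.1 *
    ordinaryHypergeometricCoefficient u v σ p.2

lemma gasperConv_zero (σ a u v : K) : gasperConv σ a u v 0 = 1 := by
  simp [gasperConv, ordinaryHypergeometricCoefficient_zero_right]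

lemma gasperConv_one (hσ : 0 < σ) (a u v : K) :
    gasperConv σ a u v 1 = (u * v - a / 2) / σ := by
  simp only [gasperConv, Nat.sum_antidiagonal_succ, HasAntidiagonal.antidiagonal_zero,
    sum_singleton, ordinaryHypergeometricCoefficient_eq, poch_succ, poch_zero]
  simp only [mul_one, Nat.factorial_zero, Nat.cast_one, ne_eq, one_ne_zero, not_false_eq_true,
    div_self, CharP.cast_eq_zero, add_zero, one_mul, zero_add, Nat.factorial_one]
  field_simp
  ring

lemma gasperConv_le (hσ : 0 < σ) (ha : 0 < a) (hu : 0 < u) (hv : 0 < v) (n : ℕ) :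
    gasperConv σ a u v n ≤ ordinaryHypergeometricCoefficient u v σ n := by
  cases n with
  | zero => rw [gasperConv_zero, ordinaryHypergeometricCoefficient_zero_right]
  | succ n =>
    rw [gasperConv, Nat.sum_antidiagonal_succ, ordinaryHypergeometricCoefficient_zero_right,
      one_mul]
    refine add_le_of_nonpos_right (sum_nonpos fun p _ ↦ ?_)
    exact (mul_neg_of_neg_of_pos (ordinaryHypergeometricCoefficient_neg_half_neg ha hσ p.1)
      (ordinaryHypergeometricCoefficient_pos hu hv hσ p.2)).le

lemma succ_mul_gasperConv_succ (hσ : 0 < σ) (h : u + v + a = 2 * σ + 1 / 2) (n : ℕ) :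
    (n + 1) * gasperConv σ a u v (n + 1) =
      ∑ p ∈ antidiagonal n, ordinaryHypergeometricCoefficient a (-1 / 2) σ p.1 *
        ordinaryHypergeometricCoefficient u v σ p.2 *
        (n + ((σ + 1 / 2) * (σ - a) / (σ + p.1) + (σ - u) * (σ - v) / (σ + p.2))) := by
  rw [gasperConv, succ_mul_sum_antidiagonal
    (ordinaryHypergeometricCoefficient_succ hσ a (-1 / 2))
    (ordinaryHypergeometricCoefficient_succ hσ u v)]
  refine sum_congr rfl fun p hp ↦ ?_
  obtain rfl : v = 2 * σ + 1 / 2 - a - u := by linear_combination h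
  rw [← mem_antidiagonal.mp hp, mul_comm]
  congr 1
  push_cast
  field_simp
  ring

lemma div_add_div_le_of_nonpos {P Q i j n : K} (hσ : 0 < σ) (hP : 0 ≤ P) (hQ : Q ≤ 0)
    (hi : 0 ≤ i) (hj : 0 ≤ j) (hjn : j ≤ n) :
    P / (σ + i) + Q / (σ + j) ≤ P / σ + Q / (σ + n) := by
  refine add_le_add (div_le_div_of_nonneg_left hP hσ (by linarith)) ?_
  rw [div_le_div_iff₀ (by linarith) (by linarith)]
  exact mul_le_mul_of_nonpos_left (by linarith) hQ

lemma div_add_div_lt_of_nonpos {P Q i j n : K} (hσ : 0 < σ) (hP : 0 < P) (hQ : Q ≤ 0)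
    (hi : 0 < i) (hj : 0 ≤ j) (hjn : j ≤ n) :
    P / (σ + i) + Q / (σ + j) < P / σ + Q / (σ + n) :=
  (add_lt_add_left (div_lt_div_of_pos_left hP hσ (by linarith)) _).trans_le <| by
    simpa using div_add_div_le_of_nonpos hσ hP.le hQ le_rfl hj hjn

lemma gasperConv_term_le (hσ : 0 < σ) (ha : 0 < a) (hu : 0 < u) (hv : 0 < v) {P Q : K}
    (hP : 0 ≤ P) (hQ : Q ≤ 0) {n : ℕ} {p : ℕ × ℕ} (hp : p ∈ antidiagonal n) :
    ordinaryHypergeometricCoefficient a (-1 / 2) σ p.1 *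
        ordinaryHypergeometricCoefficient u v σ p.2 * (n + (P / σ + Q / (σ + n))) ≤
      ordinaryHypergeometricCoefficient a (-1 / 2) σ p.1 *
        ordinaryHypergeometricCoefficient u v σ p.2 * (n + (P / (σ + p.1) + Q / (σ + p.2))) := by
  obtain ⟨_ | i, j⟩ := p
  · obtain rfl : j = n := by simpa using hp
    simp
  · obtain rfl : i + 1 + j = n := mem_antidiagonal.mp hp
    refine mul_le_mul_of_nonpos_left ?_ (mul_neg_of_neg_of_pos
      (ordinaryHypergeometricCoefficient_neg_half_neg ha hσ i)
      (ordinaryHypergeometricCoefficient_pos hu hv hσ j)).le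
    exact add_le_add le_rfl (div_add_div_le_of_nonpos hσ hP hQ (Nat.cast_nonneg _)
      (Nat.cast_nonneg _) (by exact_mod_cast Nat.le_add_left j (i + 1)))

lemma gasperConv_mul_le (hσ : 0 < σ) (ha : 0 < a) (hu : 0 < u) (hv : 0 < v)
    (h : u + v + a = 2 * σ + 1 / 2) (haσ : a ≤ σ) (hQ : (σ - u) * (σ - v) ≤ 0) (n : ℕ) :
    gasperConv σ a u v n * (n + ((σ + 1 / 2) * (σ - a) / σ + (σ - u) * (σ - v) / (σ + n))) ≤
      (n + 1) * gasperConv σ a u v (n + 1) := by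
  rw [succ_mul_gasperConv_succ hσ h, gasperConv, sum_mul]
  exact sum_le_sum fun p hp ↦ gasperConv_term_le hσ ha hu hv
    (mul_nonneg (by linarith) (by linarith)) hQ hp

lemma gasperConv_mul_lt (hσ : 0 < σ) (ha : 0 < a) (hu : 0 < u) (hv : 0 < v)
    (h : u + v + a = 2 * σ + 1 / 2) (haσ : a < σ) (hQ : (σ - u) * (σ - v) ≤ 0) {n : ℕ}
    (hn : 1 ≤ n) :
    gasperConv σ a u v n * (n + ((σ + 1 / 2) * (σ - a) / σ + (σ - u) * (σ - v) / (σ + n))) <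
      (n + 1) * gasperConv σ a u v (n + 1) := by
  have hP : 0 < (σ + 1 / 2) * (σ - a) := mul_pos (by linarith) (by linarith)
  rw [succ_mul_gasperConv_succ hσ h, gasperConv, sum_mul]
  refine sum_lt_sum (fun p hp ↦ gasperConv_term_le hσ ha hu hv hP.le hQ hp)
    ⟨(0 + 1, n - 1), by simp; omega, ?_⟩
  refine mul_lt_mul_of_neg_left ?_ (mul_neg_of_neg_of_pos
    (ordinaryHypergeometricCoefficient_neg_half_neg ha hσ 0)
    (ordinaryHypergeometricCoefficient_pos hu hv hσ (n - 1)))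
  exact add_lt_add_of_le_of_lt le_rfl (div_add_div_lt_of_nonpos hσ hP hQ (by simp)
    (Nat.cast_nonneg _) (by exact_mod_cast Nat.sub_le n 1))

lemma natCast_le_gasperConv_factor (hσ : 0 < σ) (h : u + v + a = 2 * σ + 1 / 2)
    (huv : a / 2 ≤ u * v) (hQ : (σ - u) * (σ - v) ≤ 0) (n : ℕ) :
    (n : K) ≤ n + ((σ + 1 / 2) * (σ - a) / σ + (σ - u) * (σ - v) / (σ + n)) := by
  have hPQ : (σ + 1 / 2) * (σ - a) + (σ - u) * (σ - v) = u * v - a / 2 := by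
    linear_combination -σ * h
  have hle := div_add_div_le_of_nonpos (P := 0) hσ le_rfl hQ le_rfl le_rfl
    (Nat.cast_nonneg (α := K) n)
  have hsum : 0 ≤ (σ + 1 / 2) * (σ - a) / σ + (σ - u) * (σ - v) / σ := by
    rw [← add_div, hPQ]
    exact div_nonneg (by linarith) hσ.le
  simp only [zero_div, add_zero, zero_add] at hle
  linarith

lemma gasperConv_nonneg_of_nonpos (hσ : 0 < σ) (ha : 0 < a) (hu : 0 < u) (hv : 0 < v)
    (h : u + v + a = 2 * σ + 1 / 2) (haσ : a ≤ σ) (huv : a / 2 ≤ u * v)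
    (hQ : (σ - u) * (σ - v) ≤ 0) (n : ℕ) : 0 ≤ gasperConv σ a u v n := by
  induction n with
  | zero => rw [gasperConv_zero]; exact zero_le_one
  | succ n ih =>
    have hfactor := n.cast_nonneg.trans (natCast_le_gasperConv_factor hσ h huv hQ n)
    have hstep := gasperConv_mul_le hσ ha hu hv h haσ hQ n
    exact nonneg_of_mul_nonneg_right ((mul_nonneg ih hfactor).trans hstep) n.cast_add_one_pos

lemma gasperConv_succ_pos (ha : 0 < a) (hu : 0 < u) (hv : 0 < v) (h : u + v + a = 2 * σ + 1 / 2)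
    (haσ : a < σ) (huv : u * v = a / 2) {n : ℕ} (hn : 1 ≤ n) : 0 < gasperConv σ a u v (n + 1) := by
  have hσ := ha.trans haσ
  have hQ : (σ - u) * (σ - v) ≤ 0 := by
    have hP : 0 ≤ (σ + 1 / 2) * (σ - a) := mul_nonneg (by linarith) (by linarith)
    linear_combination hP - σ * h + huv
  have hfactor := n.cast_nonneg.trans (natCast_le_gasperConv_factor hσ h huv.ge hQ n)
  have hE := gasperConv_nonneg_of_nonpos hσ ha hu hv h haσ.le huv.ge hQ n
  exact pos_of_mul_pos_right ((mul_nonneg hE hfactor).trans_lt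
    (gasperConv_mul_lt hσ ha hu hv h haσ hQ hn)) n.cast_add_one_pos.le

/-- The coefficients of the expansion of `₁F₂(a; u + a, v + a; -y)` in squares of Bessel
functions. Up to a factor `n!` they are terminating balanced `₄F₃(1)` series. -/
noncomputable def gasperCoeff (σ a u v : K) : ℕ → K :=
  baileyTransform (2 * σ) (pochQuotient σ a (σ + 1 / 2) (u + a) (v + a))

lemma add_natCast_ne_zero {x : K} (hx : 0 < x) (k : ℕ) : x + k ≠ 0 := by
  positivity

lemma gasperCoeff_eq (hσ : 0 < σ) (ha : 0 < a) (hu : 0 < u) (hv : 0 < v)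
    (h : u + v + a = 2 * σ + 1 / 2) (n : ℕ) :
    gasperCoeff σ a u v n =
      poch σ n / (poch (u + a) n * poch (v + a) n) * gasperConv σ a u v n := by
  rw [gasperCoeff, whipple (add_natCast_ne_zero hσ) (add_natCast_ne_zero (by linarith))
    (add_natCast_ne_zero (by linarith)) (by linarith), gasperConv]
  simp only [add_sub_cancel_right, show σ - (σ + 1 / 2) = -1 / 2 by ring]

lemma poch_div_poch_mul_poch_pos (hσ : 0 < σ) (ha : 0 < a) (hu : 0 < u) (hv : 0 < v) (n : ℕ) :
    0 < poch σ n / (poch (u + a) n * poch (v + a) n) :=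
  div_pos (poch_pos hσ n) (mul_pos (poch_pos (by linarith) n) (poch_pos (by linarith) n))

lemma gasperCoeff_nonneg_of_nonneg (hσ : 0 < σ) (ha : 0 < a) (hu : 0 < u) (hv : 0 < v)
    (h : u + v + a = 2 * σ + 1 / 2) (haσ : a ≤ σ) (hQ : 0 ≤ (σ - u) * (σ - v)) (n : ℕ) :
    0 ≤ gasperCoeff σ a u v n := by
  rw [gasperCoeff, pochQuotient_comm, whipple (add_natCast_ne_zero hσ)
    (add_natCast_ne_zero (by linarith)) (add_natCast_ne_zero (by linarith)) (by linarith)]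
  refine mul_nonneg (poch_div_poch_mul_poch_pos hσ ha hu hv n).le
    (sum_nonneg fun p _ ↦ mul_nonneg ?_ ?_) <;>
    rw [ordinaryHypergeometricCoefficient_eq]
  · have := poch_pos hσ p.1
    have := poch_nonneg (sub_nonneg.mpr haσ) p.1
    have := poch_nonneg (show 0 ≤ σ + 1 / 2 by linarith) p.1
    positivity
  · rw [show u + a - (σ + 1 / 2) = σ - v by linear_combination h,
      show v + a - (σ + 1 / 2) = σ - u by linear_combination h]
    have := poch_pos hσ p.2
    exact div_nonneg (poch_mul_poch_nonneg (by linarith) (by linarith) p.2) (by positivity)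

theorem gasperCoeff_nonneg (ha : 0 < a) (hu : 0 < u) (hv : 0 < v)
    (h : u + v + a = 2 * σ + 1 / 2) (haσ : a ≤ σ) (huv : a / 2 ≤ u * v) (n : ℕ) :
    0 ≤ gasperCoeff σ a u v n := by
  have hσ := ha.trans_le haσ
  rcases le_total 0 ((σ - u) * (σ - v)) with hQ | hQ
  · exact gasperCoeff_nonneg_of_nonneg hσ ha hu hv h haσ hQ n
  · rw [gasperCoeff_eq hσ ha hu hv h]
    exact mul_nonneg (poch_div_poch_mul_poch_pos hσ ha hu hv n).le
      (gasperConv_nonneg_of_nonpos hσ ha hu hv h haσ huv hQ n)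

lemma gasperCoeff_le (hσ : 0 < σ) (ha : 0 < a) (hu : 0 < u) (hv : 0 < v)
    (h : u + v + a = 2 * σ + 1 / 2) (n : ℕ) : gasperCoeff σ a u v n ≤ 1 / n ! := by
  have hu₁ := poch_pos hu n
  have hv₁ := poch_pos hv n
  have hu₂ : poch u n ≤ poch (u + a) n := poch_le_poch hu.le (by linarith) n
  have hv₂ : poch v n ≤ poch (v + a) n := poch_le_poch hv.le (by linarith) n
  have hu₃ := hu₁.trans_le hu₂
  have hv₃ := hv₁.trans_le hv₂
  have hσn := poch_pos hσ n
  calc gasperCoeff σ a u v n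
    _ ≤ poch σ n / (poch (u + a) n * poch (v + a) n) *
        ordinaryHypergeometricCoefficient u v σ n := by
      rw [gasperCoeff_eq hσ ha hu hv h]
      exact mul_le_mul_of_nonneg_left (gasperConv_le hσ ha hu hv n)
        (poch_div_poch_mul_poch_pos hσ ha hu hv n).le
    _ = poch u n * poch v n / (poch (u + a) n * poch (v + a) n) / n ! := by
      rw [ordinaryHypergeometricCoefficient_eq]
      field_simp
    _ ≤ 1 / n ! := by
      gcongr
      exact div_le_one_of_le₀ (by gcongr) (by positivity)

theorem exists_gasperCoeff_pos_and_succ_pos (ha : 0 < a) (hu : 0 < u) (hv : 0 < v)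
    (h : u + v + a = 2 * σ + 1 / 2) (haσ : a ≤ σ) (huv : a / 2 ≤ u * v)
    (hne : ¬(σ = a ∧ u * v = a / 2)) :
    ∃ n, 0 < gasperCoeff σ a u v n ∧ 0 < gasperCoeff σ a u v (n + 1) := by
  have hσ := ha.trans_le haσ
  have pos_of_gasperConv_pos {n : ℕ} (hn : 0 < gasperConv σ a u v n) :
      0 < gasperCoeff σ a u v n := by
    rw [gasperCoeff_eq hσ ha hu hv h]
    exact mul_pos (poch_div_poch_mul_poch_pos hσ ha hu hv n) hn
  rcases huv.lt_or_eq with huv | huv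
  · refine ⟨0, pos_of_gasperConv_pos ?_, pos_of_gasperConv_pos ?_⟩
    · rw [gasperConv_zero]
      exact one_pos
    · rw [zero_add, gasperConv_one hσ]
      exact div_pos (by linarith) hσ
  · have haσ : a < σ := haσ.lt_of_ne fun heq ↦ hne ⟨heq.symm, huv.symm⟩
    exact ⟨2, pos_of_gasperConv_pos (gasperConv_succ_pos ha hu hv h haσ huv.symm le_rfl),
      pos_of_gasperConv_pos (gasperConv_succ_pos ha hu hv h haσ huv.symm one_le_two)⟩

end Positivity

section NormBessel

/-- The series `₀F₁(; m; -w)`, that is, `J_{m-1}(2 √w)` divided by its leading term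
`w ^ ((m - 1) / 2) / Γ(m)`. -/
noncomputable def normBessel (m w : ℝ) : ℝ :=
  ∑' k : ℕ, (-w) ^ k / (k ! * poch m k)

variable {m : ℝ}

lemma norm_normBessel_term_le (hm : 0 < m) (w : ℝ) (k : ℕ) :
    ‖(-w) ^ k / (k ! * poch m k)‖ ≤ (|w| / m) ^ k / k ! := by
  rw [norm_div, norm_pow, norm_neg, Real.norm_eq_abs,
    Real.norm_of_nonneg (mul_nonneg (Nat.cast_nonneg _) (poch_pos hm k).le), div_pow, div_div,
    mul_comm]
  gcongr
  exact pow_le_poch hm.le k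

lemma summable_norm_normBessel_term (hm : 0 < m) (w : ℝ) :
    Summable fun k : ℕ ↦ ‖(-w) ^ k / (k ! * poch m k)‖ :=
  .of_nonneg_of_le (fun _ ↦ norm_nonneg _) (norm_normBessel_term_le hm w)
    (Real.summable_pow_div_factorial _)

lemma normBessel_sub_normBessel_add_one (hm : 0 < m) (w : ℝ) :
    normBessel m w - normBessel (m + 1) w = -w / (m * (m + 1)) * normBessel (m + 2) w := by
  have hm₁ : 0 < m + 1 := by linarith
  have h₀ := (summable_norm_normBessel_term hm w).of_norm
  have h₁ := (summable_norm_normBessel_term hm₁ w).of_norm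
  rw [normBessel, normBessel, normBessel, ← h₀.tsum_sub h₁, ← tsum_mul_left,
    (h₀.sub h₁).tsum_eq_zero_add]
  simp only [poch_zero, pow_zero, sub_self, zero_add]
  refine tsum_congr fun k ↦ ?_
  have hm₂ : poch (m + 1) (k + 1) = (m + 1) * poch (m + 2) k := by
    rw [poch_succ_left, add_assoc, one_add_one_eq_two]
  have hpoch : poch (m + 1) k = (m + 1) * poch (m + 2) k / (m + 1 + k) := by
    rw [eq_div_iff (by positivity), ← poch_succ, hm₂]
  have := poch_pos (show 0 < m + 2 by linarith) k
  rw [poch_succ_left, hm₂, hpoch, Nat.factorial_succ, pow_succ]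
  push_cast
  field_simp
  ring

lemma normBessel_add_natCast_eq_zero {w : ℝ} (hm : 0 < m) (hw : w ≠ 0) (h₀ : normBessel m w = 0)
    (h₁ : normBessel (m + 1) w = 0) (n : ℕ) : normBessel (m + n) w = 0 := by
  suffices normBessel (m + n) w = 0 ∧ normBessel (m + n + 1) w = 0 from this.1
  induction n with
  | zero => simpa using ⟨h₀, h₁⟩
  | succ n ih =>
    have hrec := normBessel_sub_normBessel_add_one (show 0 < m + n by positivity) w
    have hne : -w / ((m + n) * (m + n + 1)) ≠ 0 := div_ne_zero (neg_ne_zero.mpr hw) (by positivity)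
    rw [ih.1, ih.2, sub_self, zero_eq_mul, or_iff_right hne] at hrec
    rw [Nat.cast_succ, ← add_assoc, add_assoc _ 1 1, one_add_one_eq_two]
    exact ⟨ih.2, hrec⟩

lemma normBessel_ne_zero {w : ℝ} (h : 2 * |w| < m) : normBessel m w ≠ 0 := by
  have hm : 0 < m := (by positivity : 0 ≤ 2 * |w|).trans_lt h
  set r := |w| / m with hr
  have hr₀ : 0 ≤ r := by positivity
  have hr₁ : r < 1 / 2 := by rw [hr, div_lt_iff₀ hm]; linarith
  have hterm (k : ℕ) : ‖(-w) ^ (k + 1) / ((k + 1)! * poch m (k + 1))‖ ≤ r * r ^ k := by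
    rw [← pow_succ']
    exact (norm_normBessel_term_le hm w (k + 1)).trans
      (div_le_self (by positivity) (mod_cast Nat.succ_le_of_lt (Nat.factorial_pos _)))
  have htail := tsum_of_norm_bounded
    ((hasSum_geometric_of_lt_one hr₀ (by linarith)).mul_left r) hterm
  have hlt : r * (1 - r)⁻¹ < 1 := by
    rw [← div_eq_mul_inv, div_lt_one (by linarith)]
    linarith
  intro hzero
  rw [normBessel, (summable_norm_normBessel_term hm w).of_norm.tsum_eq_zero_add] at hzero
  simp only [pow_zero, Nat.factorial_zero, poch_zero, Nat.cast_one, mul_one, div_one] at hzero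
  rw [eq_neg_of_add_eq_zero_right hzero, norm_neg, norm_one] at htail
  exact absurd (htail.trans_lt hlt) (lt_irrefl 1)

theorem normBessel_ne_zero_or_add_one_ne_zero {w : ℝ} (hm : 0 < m) (hw : w ≠ 0) :
    normBessel m w ≠ 0 ∨ normBessel (m + 1) w ≠ 0 := by
  by_contra! h
  obtain ⟨n, hn⟩ := exists_nat_gt (2 * |w|)
  exact normBessel_ne_zero (by linarith) (normBessel_add_natCast_eq_zero hm hw h.1 h.2 n)

/-- The coefficient of `(-y)ʲ` in the square of `₀F₁(; m; -y / 4)`. -/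
noncomputable def normBesselSqCoeff (m : ℝ) (j : ℕ) : ℝ :=
  poch (m - 1 / 2) j / (poch m j * poch (2 * m - 1) j * j !)

lemma one_div_factorial_mul_poch (hm : 0 < m) {n k l : ℕ} (h : k + l = n) :
    1 / (k ! * poch m k) = (-1) ^ l / poch m n * (poch (1 - m - n) l / k !) := by
  have hreflect : poch (1 - m - n) l = (-1) ^ l * poch (m + k) l := by
    rw [← poch_reflect, ← h]
    congr 1
    push_cast
    ring
  have hsign : (-1 : ℝ) ^ l * (-1) ^ l = 1 := pow_mul_pow_eq_one l (by norm_num)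
  have := poch_pos hm k
  have := poch_pos (show 0 < m + k by positivity) l
  rw [hreflect, ← h, poch_add]
  field_simp
  rw [sq, hsign]

lemma sum_antidiagonal_one_div_factorial_mul_poch (hm : 1 / 2 < m) (n : ℕ) :
    ∑ p ∈ antidiagonal n, 1 / (p.1 ! * poch m p.1) * (1 / (p.2 ! * poch m p.2)) =
      4 ^ n * normBesselSqCoeff m n := by
  have hm₀ : 0 < m := by linarith
  have hm₁ : 0 < 2 * m - 1 := by linarith
  have hvand := sum_antidiagonal_poch_div_factorial (1 - m - n) (1 - m - n) n
  rw [show 1 - m - n + (1 - m - n) = 1 - (2 * m - 1 + n) - n by ring, poch_reflect] at hvand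
  have hdouble := poch_two_mul (m - 1 / 2) n
  rw [show 2 * (m - 1 / 2) = 2 * m - 1 by ring, sub_add_cancel, two_mul n, poch_add] at hdouble
  have hsign : (-1 : ℝ) ^ n * (-1) ^ n = 1 := pow_mul_pow_eq_one n (by norm_num)
  have := poch_pos hm₀ n
  have := poch_pos hm₁ n
  calc _ = (-1) ^ n / poch m n ^ 2 * ∑ p ∈ antidiagonal n,
        poch (1 - m - n) p.1 / p.1 ! * (poch (1 - m - n) p.2 / p.2 !) := by
        rw [mul_sum]
        refine sum_congr rfl fun p hp ↦ ?_
        rw [one_div_factorial_mul_poch hm₀ (mem_antidiagonal.mp hp),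
          one_div_factorial_mul_poch hm₀ ((add_comm _ _).trans (mem_antidiagonal.mp hp)),
          ← mem_antidiagonal.mp hp, pow_add]
        ring
    _ = 4 ^ n * normBesselSqCoeff m n := by
        rw [hvand, normBesselSqCoeff]
        generalize poch (m - 1 / 2) n = x at hdouble ⊢
        field_simp
        linear_combination hdouble + poch (2 * m - 1) n * poch (2 * m - 1 + n) n * hsign

theorem normBessel_sq (hm : 1 / 2 < m) (y : ℝ) :
    normBessel m (y / 4) ^ 2 = ∑' j : ℕ, (-y) ^ j * normBesselSqCoeff m j := by
  have hs := summable_norm_normBessel_term (show 0 < m by linarith) (y / 4)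
  rw [sq, normBessel, tsum_mul_tsum_eq_tsum_sum_antidiagonal_of_summable_norm hs hs]
  refine tsum_congr fun n ↦ ?_
  calc _ = (-(y / 4)) ^ n * ∑ p ∈ antidiagonal n,
        1 / (p.1 ! * poch m p.1) * (1 / (p.2 ! * poch m p.2)) := by
        rw [mul_sum]
        refine sum_congr rfl fun p hp ↦ ?_
        rw [← mem_antidiagonal.mp hp, pow_add]
        ring
    _ = _ := by
        rw [sum_antidiagonal_one_div_factorial_mul_poch hm, ← mul_assoc, ← mul_pow]
        ring_nf

lemma normBesselSqCoeff_nonneg (hm : 1 / 2 < m) (j : ℕ) : 0 ≤ normBesselSqCoeff m j := by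
  have := poch_pos (show 0 < m - 1 / 2 by linarith) j
  have := poch_pos (show 0 < m by linarith) j
  have := poch_pos (show 0 < 2 * m - 1 by linarith) j
  rw [normBesselSqCoeff]
  positivity

lemma normBesselSqCoeff_le (hm : 1 / 2 < m) (j : ℕ) : normBesselSqCoeff m j ≤ 2 ^ j / j ! := by
  have hpos := poch_pos (show 0 < 2 * m - 1 by linarith) j
  have hnum : poch (m - 1 / 2) j ≤ poch (2 * m - 1) j :=
    poch_le_poch (by linarith) (by linarith) j
  have hden : (1 / 2) ^ j ≤ poch m j :=
    (pow_le_poch (by norm_num) j).trans (poch_le_poch (by norm_num) hm.le j)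
  calc normBesselSqCoeff m j
    _ ≤ poch (2 * m - 1) j / ((1 / 2) ^ j * poch (2 * m - 1) j * j !) := by
      rw [normBesselSqCoeff]
      gcongr
    _ = 2 ^ j / j ! := by
      rw [one_div, inv_pow]
      field_simp

end NormBessel

section SumOfSquares

variable {σ : ℝ}

/-- The weight of the `n`-th square in the expansion into squares of Bessel functions. -/
noncomputable def besselSqWeight (σ : ℝ) (n : ℕ) : ℝ :=
  wellPoisedFactor (2 * σ) n * poch σ n / (poch (σ + 1 / 2) n * poch (2 * σ) (2 * n))

lemma wellPoisedFactor_pos {s : ℝ} (hs : 0 < s) : ∀ n, 0 < wellPoisedFactor s n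
  | 0 => one_pos
  | n + 1 => mul_pos (by positivity) (poch_pos hs n)

lemma besselSqWeight_pos (hσ : 0 < σ) (n : ℕ) : 0 < besselSqWeight σ n :=
  div_pos (mul_pos (wellPoisedFactor_pos (by linarith) n) (poch_pos hσ n))
    (mul_pos (poch_pos (by linarith) n) (poch_pos (by linarith) (2 * n)))

lemma wellPoisedFactor_le {s : ℝ} (hs : 0 < s) (n : ℕ) :
    wellPoisedFactor s n ≤ (1 + 1 / s) * poch s (2 * n) := by
  rcases n with _ | n
  · simp only [wellPoisedFactor, mul_zero, poch_zero, mul_one]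
    linarith [one_div_pos.mpr hs]
  · have h₁ : poch s n ≤ poch (s + 1) n := poch_le_poch hs.le (by linarith) n
    have h₂ : 1 ≤ poch (s + 1 + n) n :=
      (one_le_pow₀ (by linarith [n.cast_nonneg (α := ℝ)])).trans (pow_le_poch (by positivity) n)
    have h₃ := poch_pos hs n
    calc wellPoisedFactor s (n + 1)
      _ ≤ (s + 2 * n + 1) * (poch (s + 1) n * poch (s + 1 + n) n) := by
        rw [wellPoisedFactor]
        gcongr
        exact h₁.trans (le_mul_of_one_le_right (h₃.le.trans h₁) h₂)
      _ ≤ (s + 1) * ((s + 2 * n + 1) * (poch (s + 1) n * poch (s + 1 + n) n)) := by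
        refine le_mul_of_one_le_left ?_ (by linarith)
        have := h₃.trans_le h₁
        positivity
      _ = (1 + 1 / s) * poch s (2 * (n + 1)) := by
        rw [show 2 * (n + 1) = n + n + 1 + 1 by ring, poch_succ_left, poch_succ, poch_add (s + 1)]
        push_cast
        field_simp
        ring

lemma besselSqWeight_le (hσ : 0 < σ) (n : ℕ) : besselSqWeight σ n ≤ 1 + 1 / (2 * σ) := by
  have h₁ := poch_pos (show 0 < σ + 1 / 2 by linarith) n
  have h₂ := poch_pos (show 0 < 2 * σ by linarith) (2 * n)
  rw [besselSqWeight, div_le_iff₀ (by positivity), mul_left_comm, mul_comm]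
  exact mul_le_mul (poch_le_poch hσ.le (by linarith) n) (wellPoisedFactor_le (by linarith) n)
    (wellPoisedFactor_pos (by linarith) n).le h₁.le

lemma besselSqWeight_mul_normBesselSqCoeff (hσ : 0 < σ) (n j : ℕ) :
    besselSqWeight σ n * normBesselSqCoeff (σ + 1 / 2 + n) j =
      poch σ (n + j) / poch (σ + 1 / 2) (n + j) *
        (wellPoisedFactor (2 * σ) n / (j ! * poch (2 * σ) (n + j + n))) := by
  rw [besselSqWeight, normBesselSqCoeff, show σ + 1 / 2 + n - 1 / 2 = σ + n by ring,
    show 2 * (σ + 1 / 2 + n) - 1 = 2 * σ + (2 * n : ℕ) by push_cast; ring,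
    show n + j + n = 2 * n + j by ring, poch_add σ, poch_add (σ + 1 / 2), poch_add (2 * σ) (2 * n)]
  have := poch_pos (show 0 < σ + 1 / 2 by linarith) n
  have := poch_pos (show 0 < 2 * σ by linarith) (2 * n)
  field_simp

lemma sum_besselSqWeight_mul_baileyTransform (hσ : 0 < σ) (t : ℕ → ℝ) (n : ℕ) :
    ∑ p ∈ antidiagonal n, (-1) ^ p.1 * baileyTransform (2 * σ) t p.1 *
      (besselSqWeight σ p.1 * normBesselSqCoeff (σ + 1 / 2 + p.1) p.2) =
      poch σ n / poch (σ + 1 / 2) n * (t n / n !) := by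
  rw [← sum_wellPoisedFactor_mul_baileyTransform
    (add_natCast_ne_zero (show 0 < 2 * σ by linarith)) t n, mul_sum]
  refine sum_congr rfl fun p hp ↦ ?_
  rw [besselSqWeight_mul_normBesselSqCoeff hσ, mem_antidiagonal.mp hp]
  ring

lemma summable_besselSqWeight_mul (hσ : 0 < σ) {d : ℕ → ℝ} (hd : ∀ n, |d n| ≤ 1 / n !) (y : ℝ) :
    Summable fun p : ℕ × ℕ ↦ besselSqWeight σ p.1 * d p.1 * y ^ p.1 *
      ((-y) ^ p.2 * normBesselSqCoeff (σ + 1 / 2 + p.1) p.2) := by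
  have h₁ : Summable fun n : ℕ ↦ (1 + 1 / (2 * σ)) * (|y| ^ n / n !) :=
    (Real.summable_pow_div_factorial _).mul_left _
  have h₂ : Summable fun j : ℕ ↦ (2 * |y|) ^ j / j ! := Real.summable_pow_div_factorial _
  refine .of_norm_bounded (h₁.mul_of_nonneg h₂ (fun n ↦ by positivity) fun j ↦ by positivity)
    fun ⟨n, j⟩ ↦ ?_
  have hm : 1 / 2 < σ + 1 / 2 + n := by linarith [n.cast_nonneg (α := ℝ)]
  have hcoeff := normBesselSqCoeff_nonneg hm j
  simp only [norm_mul, norm_pow, norm_neg, Real.norm_eq_abs,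
    abs_of_pos (besselSqWeight_pos hσ n), abs_of_nonneg hcoeff]
  calc _ ≤ (1 + 1 / (2 * σ)) * (1 / n !) * |y| ^ n * (|y| ^ j * (2 ^ j / j !)) := by
        gcongr
        · exact besselSqWeight_le hσ n
        · exact hd n
        · exact normBesselSqCoeff_le hm j
    _ = _ := by
        rw [mul_pow]
        ring

theorem hasSum_baileyTransform_mul_normBessel_sq (hσ : 0 < σ) {t : ℕ → ℝ}
    (ht : ∀ n, |baileyTransform (2 * σ) t n| ≤ 1 / n !) (y : ℝ) :
    HasSum (fun n : ℕ ↦ besselSqWeight σ n * baileyTransform (2 * σ) t n * y ^ n *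
        normBessel (σ + 1 / 2 + n) (y / 4) ^ 2)
      (∑' n : ℕ, (-y) ^ n * (poch σ n / poch (σ + 1 / 2) n * (t n / n !))) := by
  have hsum := summable_besselSqWeight_mul hσ ht y
  have hdiag := ((sigmaAntidiagonalEquivProd (A := ℕ)).hasSum_iff.mpr hsum.hasSum).sigma
    fun n ↦ hasSum_fintype _
  have hrows := hsum.hasSum.prod_fiberwise fun n ↦ (hsum.prod_factor n).hasSum
  convert hrows using 1
  · ext n
    rw [normBessel_sq (by linarith [n.cast_nonneg (α := ℝ)]), ← tsum_mul_left]
  · rw [← hdiag.tsum_eq]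
    refine tsum_congr fun n ↦ ?_
    rw [← sum_besselSqWeight_mul_baileyTransform hσ, mul_sum, ← sum_coe_sort]
    refine sum_congr rfl fun p _ ↦ ?_
    simp only [Function.comp_apply, sigmaAntidiagonalEquivProd_apply]
    rw [show (-y) ^ n = (-y) ^ p.1.1 * (-y) ^ p.1.2 by rw [← pow_add, mem_antidiagonal.mp p.2],
      show y ^ p.1.1 = (-1) ^ p.1.1 * (-y) ^ p.1.1 by rw [← mul_pow, neg_one_mul, neg_neg]]
    ring

/-- The hypergeometric function `₁F₂(a; b, c; z)`. -/
noncomputable def oneFTwo (a b c z : ℝ) : ℝ :=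
  ∑' n : ℕ, poch a n / (poch b n * poch c n * n !) * z ^ n

variable {a u v : ℝ}

theorem hasSum_gasperCoeff_mul_normBessel_sq (ha : 0 < a) (hu : 0 < u) (hv : 0 < v)
    (h : u + v + a = 2 * σ + 1 / 2) (haσ : a ≤ σ) (huv : a / 2 ≤ u * v) (y : ℝ) :
    HasSum (fun n : ℕ ↦ besselSqWeight σ n * gasperCoeff σ a u v n * y ^ n *
        normBessel (σ + 1 / 2 + n) (y / 4) ^ 2) (oneFTwo a (u + a) (v + a) (-y)) := by
  have hσ := ha.trans_le haσ
  have hcoeff (n : ℕ) : |gasperCoeff σ a u v n| ≤ 1 / n ! := by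
    rw [abs_of_nonneg (gasperCoeff_nonneg ha hu hv h haσ huv n)]
    exact gasperCoeff_le hσ ha hu hv h n
  have hseries : oneFTwo a (u + a) (v + a) (-y) = ∑' n : ℕ, (-y) ^ n * (poch σ n /
      poch (σ + 1 / 2) n * (pochQuotient σ a (σ + 1 / 2) (u + a) (v + a) n / n !)) :=
    tsum_congr fun n ↦ by
      have := poch_pos hσ n
      have hden := poch_pos (show 0 < σ + 1 / 2 by linarith) n
      rw [pochQuotient]
      generalize poch (σ + 1 / 2) n = q at hden ⊢
      field_simp
  rw [hseries]
  exact hasSum_baileyTransform_mul_normBessel_sq hσ hcoeff y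

lemma besselSqWeight_mul_gasperCoeff_nonneg (ha : 0 < a) (hu : 0 < u) (hv : 0 < v)
    (h : u + v + a = 2 * σ + 1 / 2) (haσ : a ≤ σ) (huv : a / 2 ≤ u * v) {y : ℝ} (hy : 0 ≤ y)
    (n : ℕ) :
    0 ≤ besselSqWeight σ n * gasperCoeff σ a u v n * y ^ n *
      normBessel (σ + 1 / 2 + n) (y / 4) ^ 2 := by
  have := besselSqWeight_pos (ha.trans_le haσ) n
  have := gasperCoeff_nonneg ha hu hv h haσ huv n
  positivity

theorem oneFTwo_neg_nonneg (ha : 0 < a) (hu : 0 < u) (hv : 0 < v)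
    (h : u + v + a = 2 * σ + 1 / 2) (haσ : a ≤ σ) (huv : a / 2 ≤ u * v) {y : ℝ} (hy : 0 ≤ y) :
    0 ≤ oneFTwo a (u + a) (v + a) (-y) :=
  (hasSum_gasperCoeff_mul_normBessel_sq ha hu hv h haσ huv y).nonneg
    (besselSqWeight_mul_gasperCoeff_nonneg ha hu hv h haσ huv hy)

theorem oneFTwo_neg_pos (ha : 0 < a) (hu : 0 < u) (hv : 0 < v)
    (h : u + v + a = 2 * σ + 1 / 2) (haσ : a ≤ σ) (huv : a / 2 ≤ u * v)
    (hne : ¬(σ = a ∧ u * v = a / 2)) {y : ℝ} (hy : 0 < y) :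
    0 < oneFTwo a (u + a) (v + a) (-y) := by
  have hσ := ha.trans_le haσ
  have pos_of_term_pos (n : ℕ) (hn : 0 < gasperCoeff σ a u v n)
      (hj : normBessel (σ + 1 / 2 + n) (y / 4) ≠ 0) : 0 < oneFTwo a (u + a) (v + a) (-y) := by
    have := besselSqWeight_pos hσ n
    exact hasSum_lt (besselSqWeight_mul_gasperCoeff_nonneg ha hu hv h haσ huv hy.le) (i := n)
      (by positivity) hasSum_zero (hasSum_gasperCoeff_mul_normBessel_sq ha hu hv h haσ huv y)
  obtain ⟨n, hn, hn'⟩ := exists_gasperCoeff_pos_and_succ_pos ha hu hv h haσ huv hne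
  rcases normBessel_ne_zero_or_add_one_ne_zero (m := σ + 1 / 2 + n) (w := y / 4) (by positivity)
    (by positivity) with hj | hj
  · exact pos_of_term_pos n hn hj
  · exact pos_of_term_pos (n + 1) hn' (by rwa [Nat.cast_succ, ← add_assoc])

end SumOfSquares

section BetaIntegral

lemma integral_Ioo_rpow_mul_one_sub_rpow {p q : ℝ} (hp : 0 < p) (hq : 0 < q) :
    ∫ y in Set.Ioo (0 : ℝ) 1, y ^ (p - 1) * (1 - y) ^ (q - 1) = ProbabilityTheory.beta p q := by
  have hbeta := ProbabilityTheory.beta_pos hp hq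
  have hmass := ProbabilityTheory.lintegral_betaPDF_eq_one hp hq
  rw [ProbabilityTheory.lintegral_betaPDF] at hmass
  have hone : ∫ y in Set.Ioo (0 : ℝ) 1,
      1 / ProbabilityTheory.beta p q * y ^ (p - 1) * (1 - y) ^ (q - 1) = 1 := by
    rw [integral_eq_lintegral_of_nonneg_ae _ (by fun_prop : Measurable _).aestronglyMeasurable,
      hmass, ENNReal.toReal_one]
    filter_upwards [ae_restrict_mem measurableSet_Ioo] with y hy
    have := hy.1
    have := sub_pos.mpr hy.2
    simp only [Pi.zero_apply]
    positivity
  simp_rw [mul_assoc, integral_const_mul] at hone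
  rwa [one_div, inv_mul_eq_one₀ hbeta.ne', eq_comm] at hone

variable {x : ℝ}

lemma image_div_sq_Ioo (hx : 0 < x) : (fun t ↦ (t / x) ^ 2) '' Set.Ioo 0 x = Set.Ioo 0 1 := by
  ext y
  simp only [Set.mem_image, Set.mem_Ioo]
  constructor
  · rintro ⟨t, ⟨ht₀, htx⟩, rfl⟩
    exact ⟨by positivity, pow_lt_one₀ (by positivity) ((div_lt_one hx).mpr htx) two_ne_zero⟩
  · rintro ⟨hy₀, hy₁⟩
    have hsqrt : √y < 1 := by rwa [Real.sqrt_lt' one_pos, one_pow]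
    exact ⟨x * √y, ⟨by positivity, mul_lt_of_lt_one_right hx hsqrt⟩,
      by rw [mul_div_cancel_left₀ _ hx.ne', Real.sq_sqrt hy₀.le]⟩

lemma injOn_div_sq_Ioo (hx : 0 < x) : Set.InjOn (fun t ↦ (t / x) ^ 2) (Set.Ioo 0 x) :=
  fun t ht t' ht' h ↦ by
    rw [← div_left_inj' hx.ne']
    exact (sq_eq_sq₀ (div_nonneg ht.1.le hx.le) (div_nonneg ht'.1.le hx.le)).mp h

lemma rpow_mul_sq_sub_sq_rpow {γ p t : ℝ} (ht : t ∈ Set.Ioo 0 x) :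
    x ^ (2 * (γ + p)) / 2 * (2 * t / x ^ 2 *
      (((t / x) ^ 2) ^ (p - 1) * (1 - (t / x) ^ 2) ^ (γ + 1 - 1))) =
      (x ^ 2 - t ^ 2) ^ γ * t ^ (2 * p - 1) := by
  have ht₀ := ht.1
  have hx : 0 < x := ht₀.trans ht.2
  have hsub : 0 ≤ x ^ 2 - t ^ 2 := sub_nonneg.mpr (pow_le_pow_left₀ ht₀.le ht.2.le 2)
  have hbase : ((t / x) ^ 2) ^ (p - 1) = t ^ (2 * p - 2) / x ^ (2 * p - 2) := by
    rw [← Real.rpow_natCast_mul (by positivity), Real.div_rpow ht₀.le hx.le, Nat.cast_ofNat,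
      mul_sub_one]
  have hcompl : (1 - (t / x) ^ 2) ^ (γ + 1 - 1) = (x ^ 2 - t ^ 2) ^ γ / x ^ (2 * γ) := by
    rw [add_sub_cancel_right, div_pow, one_sub_div (by positivity),
      Real.div_rpow hsub (by positivity), ← Real.rpow_natCast_mul hx.le, Nat.cast_ofNat]
  have ht_split : t ^ (2 * p - 1) = t ^ (2 * p - 2) * t := by
    rw [← Real.rpow_add_one ht₀.ne']
    ring_nf
  have hx_split : x ^ (2 * (γ + p)) = x ^ (2 * γ) * x ^ (2 * p - 2) * x ^ 2 := by
    rw [← Real.rpow_add hx, ← Real.rpow_add_natCast hx.ne']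
    push_cast
    ring_nf
  rw [hbase, hcompl, ht_split, hx_split]
  have := Real.rpow_pos_of_pos hx (2 * γ)
  have := Real.rpow_pos_of_pos hx (2 * p - 2)
  field_simp

theorem integral_Ioo_sq_sub_sq_rpow_mul_rpow {γ p : ℝ} (hγ : -1 < γ) (hp : 0 < p) (hx : 0 < x) :
    ∫ t in Set.Ioo 0 x, (x ^ 2 - t ^ 2) ^ γ * t ^ (2 * p - 1) =
      x ^ (2 * (γ + p)) / 2 * ProbabilityTheory.beta p (γ + 1) := by
  have hderiv (t : ℝ) (_ : t ∈ Set.Ioo 0 x) :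
      HasDerivWithinAt (fun t ↦ (t / x) ^ 2) (2 * t / x ^ 2) (Set.Ioo 0 x) t := by
    refine ((((hasDerivAt_id t).div_const x).pow 2).congr_deriv ?_).hasDerivWithinAt
    simp only [id_eq, Nat.cast_ofNat, Nat.add_one_sub_one, pow_one]
    field_simp
  rw [← integral_Ioo_rpow_mul_one_sub_rpow hp (by linarith), ← image_div_sq_Ioo hx,
    integral_image_eq_integral_abs_deriv_smul measurableSet_Ioo hderiv (injOn_div_sq_Ioo hx),
    ← integral_const_mul]
  refine setIntegral_congr_fun measurableSet_Ioo fun t ht ↦ ?_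
  have : 0 < t := ht.1
  simp only [smul_eq_mul]
  rw [abs_of_pos (by positivity), rpow_mul_sq_sub_sq_rpow ht]

end BetaIntegral

section BesselIntegral

variable {α γ a x : ℝ}

/-- The `k`-th term of `(x² - t²) ^ γ * t ^ (2 a - 1 - α) * besselJ α t`. -/
noncomputable def besselIntegrandTerm (α γ a x : ℝ) (k : ℕ) (t : ℝ) : ℝ :=
  (x ^ 2 - t ^ 2) ^ γ * t ^ (2 * a - 1 - α) *
    ((-1) ^ k / (k ! * Real.Gamma (α + k + 1)) * (t / 2) ^ (2 * (k : ℝ) + α))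

/-- The integral over `(0, x)` of the leading term of
`(x² - t²) ^ γ * t ^ (2 a - 1 - α) * besselJ α t`. -/
noncomputable def besselIntegralLeading (α γ a x : ℝ) : ℝ :=
  x ^ (2 * (γ + a)) / 2 * ProbabilityTheory.beta a (γ + 1) / (2 ^ α * Real.Gamma (α + 1))

lemma besselIntegralLeading_pos (hα : -1 < α) (hγ : -1 < γ) (ha : 0 < a) (hx : 0 < x) :
    0 < besselIntegralLeading α γ a x := by
  have := ProbabilityTheory.beta_pos ha (show 0 < γ + 1 by linarith)
  have := Real.Gamma_pos_of_pos (show 0 < α + 1 by linarith)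
  rw [besselIntegralLeading]
  positivity

lemma besselIntegrandTerm_eq {k : ℕ} {t : ℝ} (ht : 0 < t) :
    besselIntegrandTerm α γ a x k t =
      (-1) ^ k / (k ! * (2 ^ (2 * (k : ℝ) + α) * Real.Gamma (α + k + 1))) *
        ((x ^ 2 - t ^ 2) ^ γ * t ^ (2 * (a + k) - 1)) := by
  rw [besselIntegrandTerm, Real.div_rpow ht.le zero_le_two,
    show 2 * (a + k) - 1 = 2 * a - 1 - α + (2 * k + α) by ring, Real.rpow_add ht (2 * a - 1 - α)]
  ring

lemma beta_add_natCast {p q : ℝ} (hp : 0 < p) (hq : 0 < q) (k : ℕ) :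
    ProbabilityTheory.beta (p + k) q =
      poch p k / poch (q + p) k * ProbabilityTheory.beta p q := by
  rw [ProbabilityTheory.beta, ProbabilityTheory.beta, Gamma_add_natCast hp,
    show p + k + q = q + p + k by ring, Gamma_add_natCast (by positivity), add_comm q]
  ring

lemma integral_besselIntegrandTerm (hα : -1 < α) (hγ : -1 < γ) (ha : 0 < a) (hx : 0 < x) (k : ℕ) :
    ∫ t in Set.Ioo 0 x, besselIntegrandTerm α γ a x k t =
      besselIntegralLeading α γ a x *
        (poch a k / (poch (α + 1) k * poch (γ + 1 + a) k * k !) * (-(x ^ 2 / 4)) ^ k) := by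
  have hpow {z : ℝ} (hz : 0 < z) (c : ℝ) : z ^ (2 * (k : ℝ) + c) = (z ^ 2) ^ k * z ^ c := by
    rw [Real.rpow_add hz, ← pow_mul, ← Real.rpow_natCast]
    push_cast
    rfl
  rw [setIntegral_congr_fun measurableSet_Ioo fun t ht ↦ besselIntegrandTerm_eq ht.1,
    integral_const_mul, integral_Ioo_sq_sub_sq_rpow_mul_rpow hγ (by positivity) hx,
    beta_add_natCast ha (by linarith), show 2 * (γ + (a + k)) = 2 * k + 2 * (γ + a) by ring,
    hpow hx, hpow two_pos, show α + k + 1 = α + 1 + k by ring,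
    Gamma_add_natCast (by linarith), besselIntegralLeading, neg_pow (x ^ 2 / 4), div_pow,
    show (2 : ℝ) ^ 2 = 4 by norm_num]
  ring

lemma norm_besselIntegrandTerm (hα : -1 < α) {k : ℕ} {t : ℝ} (ht : t ∈ Set.Ioo 0 x) :
    ‖besselIntegrandTerm α γ a x k t‖ = (-1) ^ k * besselIntegrandTerm α γ a x k t := by
  have ht₀ := ht.1
  have hsub : 0 ≤ x ^ 2 - t ^ 2 := sub_nonneg.mpr (pow_le_pow_left₀ ht₀.le ht.2.le 2)
  have hGamma := Real.Gamma_pos_of_pos (show 0 < α + k + 1 by linarith [k.cast_nonneg (α := ℝ)])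
  have hsign : (-1 : ℝ) ^ k * (-1) ^ k = 1 := pow_mul_pow_eq_one k (by norm_num)
  have hnonneg : 0 ≤ (-1) ^ k * besselIntegrandTerm α γ a x k t := by
    rw [besselIntegrandTerm_eq ht₀, ← mul_assoc, ← mul_div_assoc, hsign]
    positivity
  rw [← Real.norm_of_nonneg hnonneg, norm_mul, norm_pow, norm_neg, norm_one, one_pow, one_mul]

lemma integral_norm_besselIntegrandTerm (hα : -1 < α) (hγ : -1 < γ) (ha : 0 < a) (hx : 0 < x)
    (k : ℕ) :
    ∫ t in Set.Ioo 0 x, ‖besselIntegrandTerm α γ a x k t‖ =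
      besselIntegralLeading α γ a x *
        (poch a k / (poch (α + 1) k * poch (γ + 1 + a) k * k !) * (x ^ 2 / 4) ^ k) := by
  rw [setIntegral_congr_fun measurableSet_Ioo fun t ht ↦ norm_besselIntegrandTerm hα ht,
    integral_const_mul, integral_besselIntegrandTerm hα hγ ha hx, mul_left_comm,
    mul_left_comm ((-1) ^ k), ← mul_pow, neg_one_mul, neg_neg]

lemma integrableOn_besselIntegrandTerm (hα : -1 < α) (hγ : -1 < γ) (ha : 0 < a) (hx : 0 < x)
    (k : ℕ) : IntegrableOn (besselIntegrandTerm α γ a x k) (Set.Ioo 0 x) := by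
  refine .of_integral_ne_zero ?_
  have := besselIntegralLeading_pos hα hγ ha hx
  have := poch_pos ha k
  have := poch_pos (show 0 < α + 1 by linarith) k
  have := poch_pos (show 0 < γ + 1 + a by linarith) k
  rw [integral_besselIntegrandTerm hα hγ ha hx]
  have := pow_ne_zero k (neg_ne_zero.mpr (show x ^ 2 / 4 ≠ 0 by positivity))
  positivity

lemma summable_oneFTwo_term {b c : ℝ} (ha : 0 < a) (hb : 0 < b) (hac : a ≤ c) {z : ℝ}
    (hz : 0 ≤ z) : Summable fun k : ℕ ↦ poch a k / (poch b k * poch c k * k !) * z ^ k := by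
  refine .of_nonneg_of_le (fun k ↦ ?_) (fun k ↦ ?_) (Real.summable_pow_div_factorial (z / b))
  all_goals
    have := poch_pos ha k
    have hb_pos := poch_pos hb k
    have hc_pos := poch_pos (ha.trans_le hac) k
  · positivity
  · have hbk : b ^ k ≤ poch b k := pow_le_poch hb.le k
    have hack : poch a k ≤ poch c k := poch_le_poch ha.le hac k
    calc poch a k / (poch b k * poch c k * k !) * z ^ k
      _ ≤ poch c k / (b ^ k * poch c k * k !) * z ^ k := by gcongr
      _ = (z / b) ^ k / k ! := by
        rw [div_pow]
        field_simp

theorem integral_sq_sub_sq_rpow_mul_rpow_mul_besselJ (hα : -1 < α) (hγ : -1 < γ) (ha : 0 < a)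
    (hx : 0 < x) :
    ∫ t in (0 : ℝ)..x, (x ^ 2 - t ^ 2) ^ γ * t ^ (2 * a - 1 - α) * besselJ α t =
      besselIntegralLeading α γ a x * oneFTwo a (α + 1) (γ + 1 + a) (-(x ^ 2 / 4)) := by
  have hsummable : Summable fun k ↦ ∫ t in Set.Ioo 0 x, ‖besselIntegrandTerm α γ a x k t‖ := by
    simp_rw [integral_norm_besselIntegrandTerm hα hγ ha hx]
    exact (summable_oneFTwo_term ha (by linarith) (by linarith) (by positivity)).mul_left _
  rw [intervalIntegral.integral_of_le hx.le, integral_Ioc_eq_integral_Ioo, oneFTwo,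
    ← tsum_mul_left]
  simp_rw [← integral_besselIntegrandTerm hα hγ ha hx, besselJ, ← tsum_mul_left]
  exact (hasSum_integral_of_summable_integral_norm
    (integrableOn_besselIntegrandTerm hα hγ ha hx) hsummable).tsum_eq.symm

end BesselIntegral

section ParameterRange

variable {α β γ : ℝ}

lemma half_le_mul_of_neg_div_mul_le (hγ : -1 < γ)
    (hβ : -((2 * γ + 1) / (2 * γ + 3)) * (α + 1) ≤ β) :
    (α - β + 1) / 2 / 2 ≤ (α + 1 + β) / 2 * (γ + 1) := by
  have hden : 0 < 2 * γ + 3 := by linarith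
  rw [neg_mul, div_mul_eq_mul_div, ← neg_div, div_le_iff₀ hden] at hβ
  linarith

lemma eq_and_eq_or_of_mul_eq_half (hβ : β = -(γ + 1 / 2))
    (h : (α + 1 + β) / 2 * (γ + 1) = (α - β + 1) / 2 / 2) :
    (α = γ + 1 / 2 ∧ β = -(γ + 1 / 2)) ∨ (γ = -1 / 2 ∧ β = 0) := by
  have hfactor : (α - (γ + 1 / 2)) * (γ + 1 / 2) = 0 := by
    subst hβ
    linear_combination 2 * h
  rcases mul_eq_zero.mp hfactor with hα | hγ
  · exact .inl ⟨sub_eq_zero.mp hα, hβ⟩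
  · exact .inr ⟨by linarith, by linarith⟩

end ParameterRange

theorem stmt15 (α β γ : ℝ) (hγ : -1 < γ) (hα : -1 < α)
    (hβ₁ : max (-(γ + 1 / 2)) (-((2 * γ + 1) / (2 * γ + 3)) * (α + 1)) ≤ β)
    (hβ₂ : β < α + 1) :
    (∀ x : ℝ, 0 < x →
        0 ≤ ∫ t in (0 : ℝ)..x, (x ^ 2 - t ^ 2) ^ γ * t ^ (-β) * besselJ α t) ∧
      (¬((α = γ + 1 / 2 ∧ β = -(γ + 1 / 2)) ∨ (γ = -1 / 2 ∧ β = 0)) →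
        ∀ x : ℝ, 0 < x →
          0 < ∫ t in (0 : ℝ)..x, (x ^ 2 - t ^ 2) ^ γ * t ^ (-β) * besselJ α t) := by
  obtain ⟨hβγ, hβα⟩ := max_le_iff.mp hβ₁
  have huv := half_le_mul_of_neg_div_mul_le hγ hβα
  set a := (α - β + 1) / 2 with ha_def
  set u := (α + 1 + β) / 2 with hu_def
  have ha : 0 < a := by linarith
  have hv : 0 < γ + 1 := by linarith
  have hu : 0 < u := pos_of_mul_pos_left (by linarith) hv.le
  set σ := (u + (γ + 1) + a - 1 / 2) / 2 with hσ_def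
  have hσ : u + (γ + 1) + a = 2 * σ + 1 / 2 := by ring
  have haσ : a ≤ σ := by linarith
  have hint (x : ℝ) (hx : 0 < x) := integral_sq_sub_sq_rpow_mul_rpow_mul_besselJ hα hγ ha hx
  rw [show 2 * a - 1 - α = -β by ring, show α + 1 = u + a by ring] at hint
  refine ⟨fun x hx ↦ ?_, fun hne x hx ↦ ?_⟩ <;> rw [hint x hx]
  · exact mul_nonneg (besselIntegralLeading_pos hα hγ ha hx).le
      (oneFTwo_neg_nonneg ha hu hv hσ haσ huv (by positivity))
  · refine mul_pos (besselIntegralLeading_pos hα hγ ha hx)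
      (oneFTwo_neg_pos ha hu hv hσ haσ huv (fun heq ↦ hne ?_) (by positivity))
    exact eq_and_eq_or_of_mul_eq_half (by linarith [heq.1]) heq.2
end
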